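/- Let A and B be C*-algebras, each admitting an AF presentation that has the Fermion property. Then A and B are isomorphic as Banach spaces, i.e. there is a continuous ℂ-linear bijection A → B with continuous inverse. -/

import Mathlib

/-!
Statement 3 (Theorem 1.3 of the paper).

Two C*-algebras admitting AF presentations with the Fermion property are
isomorphic as Banach spaces.
-/

/-- `S` is an AF presentation of the C*-algebra `A`: an increasing sequence of
finite-dimensional *-subalgebras whose union is dense. -/
def IsAFPresentation (A : Type*) [NonUnitalCStarAlgebra A]
    (S : ℕ → NonUnitalStarSubalgebra ℂ A) : Prop :=
  Monotone S ∧ (∀ k, FiniteDimensional ℂ (S k)) ∧ Dense (⋃ k, (S k : Set A))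

/-- The presentation `S` has the Fermion property: there are indices
`n 0 < n 1 < ⋯` and nonzero minimal central projections `p k` of `S (n k)` such
that for every minimal projection `e` of the corner `p k • S (n k) • p k`,
the projection `p (k+1) * e` is nonzero and is not a minimal projection of
`S (n (k+1))`. -/
def HasFermionProperty (A : Type*) [NonUnitalCStarAlgebra A]
    (S : ℕ → NonUnitalStarSubalgebra ℂ A) : Prop :=
  ∃ (n : ℕ → ℕ) (p : ℕ → A),
    StrictMono n ∧
    (∀ k, p k ∈ S (n k)) ∧
    (∀ k, p k * p k = p k ∧ star (p k) = p k) ∧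
    (∀ k, p k ≠ 0) ∧
    -- `p k` is central in `S (n k)`
    (∀ k, ∀ a ∈ S (n k), p k * a = a * p k) ∧
    -- `p k` is minimal among the central projections of `S (n k)`
    (∀ k, ∀ q ∈ S (n k), (q * q = q ∧ star q = q) → (∀ a ∈ S (n k), q * a = a * q) →
      q * p k = q → q ≠ 0 → q = p k) ∧
    -- every minimal projection `e` of the corner `p k * S (n k) * p k` meets the
    -- next summand with multiplicity at least two
    (∀ k, ∀ e ∈ S (n k), (e * e = e ∧ star e = e) → e ≠ 0 → e * p k = e →
      (∀ a ∈ S (n k), ∃ c : ℂ, e * a * e = c • e) →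
      (p (k + 1) * e ≠ 0 ∧
        ∃ q ∈ S (n (k + 1)), (q * q = q ∧ star q = q) ∧ q ≠ 0 ∧
          q * (p (k + 1) * e) = q ∧ (p (k + 1) * e) * q = q ∧ q ≠ p (k + 1) * e))

/-!
The proof is Pełczyński's decomposition method. It suffices that every C*-algebra `Z` with an AF
presentation is complemented in every Fermion AF algebra `B`: applied to `Z = C₀(ℕ, A)`, which
absorbs a copy of `A`, this gives `B ≃ A × B`, and by symmetry `A ≃ B × A`.

For the complementation, take `Z` unital. The multiplicities in the Fermion property make the full
blocks `p k * C k * p k` grow without bound, so the matrix units of each finite-dimensional stage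
`S k` of `Z` can be copied to matrix units inside a single full block of `B`; reading off matrix
entries is then a contractive left inverse of the copying map. The copies are chosen compatibly:
the unit of the copy of `S (k + 1)` cuts the copy of `S k` down to the part seen at the later stage.
The left inverses then extend one another, while the copying maps have to be corrected by the
orthogonal pieces that were cut off. Passing to the limit gives a contractive embedding of `Z` with
a contractive left inverse.
-/

namespace FermionAF

universe u v

section FiniteDimensionalSubalgebras

variable {A : Type*} [NonUnitalCStarAlgebra A]

lemma norm_add_eq_max_of_orthogonal {x y : A} (hleft : star x * y = 0) (hright : x * star y = 0) :
    ‖x + y‖ = max ‖x‖ ‖y‖ := by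
  have hleft' : star y * x = 0 := by simpa using congr(star $hleft)
  have hsq : star (x + y) * (x + y) = star x * x + star y * y := by
    simp only [star_add, add_mul, mul_add, hleft, hleft', add_zero, zero_add]
  have hmax : ‖x + y‖ ^ 2 = max (‖x‖ ^ 2) (‖y‖ ^ 2) := by
    simp only [sq, ← CStarRing.norm_star_mul_self, hsq]
    refine IsSelfAdjoint.norm_add_eq_max (.star_mul_self x) (.star_mul_self y) ?_
    rw [mul_assoc, ← mul_assoc x, hright, zero_mul, mul_zero]
  rw [← (pow_left_monotoneOn (n := 2)).map_max (norm_nonneg x) (norm_nonneg y)] at hmax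
  exact (pow_left_inj₀ (norm_nonneg _) (le_max_of_le_left (norm_nonneg x)) two_ne_zero).mp hmax

lemma norm_sum_le_of_orthogonal {ι : Type*} (F : Finset ι) (x : ι → A) {M : ℝ} (hM : 0 ≤ M)
    (hleft : (F : Set ι).Pairwise fun i j => star (x i) * x j = 0)
    (hright : (F : Set ι).Pairwise fun i j => x i * star (x j) = 0)
    (hx : ∀ i ∈ F, ‖x i‖ ≤ M) : ‖∑ i ∈ F, x i‖ ≤ M := by
  classical
  induction F using Finset.induction_on with
  | empty => simpa using hM
  | insert a F ha ih =>
    have hne : ∀ j ∈ F, a ≠ j := fun j hj hEq => ha (hEq ▸ hj)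
    rw [Finset.coe_insert] at hleft hright
    rw [Finset.sum_insert ha, norm_add_eq_max_of_orthogonal]
    · exact max_le (hx a (Finset.mem_insert_self a F))
        (ih (hleft.mono (Set.subset_insert _ _)) (hright.mono (Set.subset_insert _ _))
          fun i hi => hx i (Finset.mem_insert_of_mem hi))
    · rw [Finset.mul_sum]
      exact Finset.sum_eq_zero fun j hj =>
        hleft (Set.mem_insert a _) (Set.mem_insert_of_mem _ hj) (hne j hj)
    · rw [star_sum, Finset.mul_sum]
      exact Finset.sum_eq_zero fun j hj =>
        hright (Set.mem_insert a _) (Set.mem_insert_of_mem _ hj) (hne j hj)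

lemma isClosed_of_finiteDimensional (C : NonUnitalStarSubalgebra ℂ A)
    [hC : FiniteDimensional ℂ C] : IsClosed (C : Set A) :=
  have : FiniteDimensional ℂ C.toSubmodule := hC
  Submodule.closed_of_finiteDimensional C.toSubmodule

lemma finiteDimensional_of_le {C K : NonUnitalStarSubalgebra ℂ A} [hC : FiniteDimensional ℂ C]
    (h : K ≤ C) : FiniteDimensional ℂ K :=
  have : FiniteDimensional ℂ C.toSubmodule := hC
  Submodule.finiteDimensional_of_le (S₁ := K.toSubmodule) (S₂ := C.toSubmodule) h

instance finiteDimensional_inf (C K : NonUnitalStarSubalgebra ℂ A) [FiniteDimensional ℂ C] :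
    FiniteDimensional ℂ (C ⊓ K : NonUnitalStarSubalgebra ℂ A) :=
  finiteDimensional_of_le inf_le_left

-- By compactness of the unit ball the approximate unit of `C` has a cluster point.
lemma exists_unit_of_finiteDimensional (C : NonUnitalStarSubalgebra ℂ A) [FiniteDimensional ℂ C] :
    ∃ u ∈ C, IsStarProjection u ∧ ∀ c ∈ C, u * c = c ∧ c * u = c := by
  have : IsClosed (C : Set A) := isClosed_of_finiteDimensional C
  let _ : PartialOrder C := CStarAlgebra.spectralOrder C
  have : StarOrderedRing C := CStarAlgebra.spectralOrderedRing C
  have : ProperSpace C := FiniteDimensional.proper ℂ C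
  have happrox := CStarAlgebra.increasingApproximateUnit C
  obtain ⟨u, -, hu⟩ := (isCompact_closedBall (0 : C) 1) (f := CStarAlgebra.approximateUnit C)
    (Filter.le_principal_iff.mpr happrox.closedBall_mem)
  have hleft (c : C) : u * c = c := by
    have hcluster : MapClusterPt (u * c) (CStarAlgebra.approximateUnit C) (fun x => x * c) :=
      MapClusterPt.continuousAt_comp (f := fun x : C => x * c) (u := id)
        (by fun_prop) (by simpa [MapClusterPt] using hu)
    have : (nhds (u * c) ⊓ nhds c).NeBot := hcluster.clusterPt.mono (happrox.tendsto_mul_right c)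
    exact eq_of_nhds_neBot this
  have hstar : star u = u :=
    (hleft (star u)).symm.trans (by simpa using congr(star $(hleft (star u))))
  have hright (c : C) : c * u = c := by simpa [hstar] using congr(star $(hleft (star c)))
  exact ⟨u, u.2, ⟨congr(($(hleft u) : A)), congr(($hstar : A))⟩,
    fun c hc => ⟨congr(($(hleft ⟨c, hc⟩) : A)), congr(($(hright ⟨c, hc⟩) : A))⟩⟩

/-- The corner `e A e` of a self-adjoint element `e`, encoded as the elements on which `e` acts as
a unit from both sides. -/
def corner {e : A} (he : IsSelfAdjoint e) : NonUnitalStarSubalgebra ℂ A where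
  carrier := {x | e * x = x ∧ x * e = x}
  add_mem' hx hy := ⟨by rw [mul_add, hx.1, hy.1], by rw [add_mul, hx.2, hy.2]⟩
  zero_mem' := ⟨mul_zero e, zero_mul e⟩
  mul_mem' hx hy := ⟨by rw [← mul_assoc, hx.1], by rw [mul_assoc, hy.2]⟩
  smul_mem' c x hx := ⟨by rw [mul_smul_comm, hx.1], by rw [smul_mul_assoc, hx.2]⟩
  star_mem' {x} hx := ⟨by simpa [he.star_eq] using congr(star $(hx.2)),
    by simpa [he.star_eq] using congr(star $(hx.1))⟩

lemma mem_corner {e : A} {he : IsSelfAdjoint e} {x : A} :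
    x ∈ corner he ↔ e * x = x ∧ x * e = x := Iff.rfl

/-- The two-sided annihilator of a self-adjoint set. -/
def annihilator {X : Set A} (hX : ∀ w ∈ X, star w ∈ X) : NonUnitalStarSubalgebra ℂ A where
  carrier := {x | ∀ w ∈ X, w * x = 0 ∧ x * w = 0}
  add_mem' hx hy w hw := ⟨by rw [mul_add, (hx w hw).1, (hy w hw).1, add_zero],
    by rw [add_mul, (hx w hw).2, (hy w hw).2, add_zero]⟩
  zero_mem' w _ := ⟨mul_zero w, zero_mul w⟩
  mul_mem' hx hy w hw := ⟨by rw [← mul_assoc, (hx w hw).1, zero_mul],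
    by rw [mul_assoc, (hy w hw).2, mul_zero]⟩
  smul_mem' c x hx w hw := ⟨by rw [mul_smul_comm, (hx w hw).1, smul_zero],
    by rw [smul_mul_assoc, (hx w hw).2, smul_zero]⟩
  star_mem' {x} hx w hw := ⟨by simpa using congr(star $((hx _ (hX w hw)).2)),
    by simpa using congr(star $((hx _ (hX w hw)).1))⟩

lemma mem_annihilator {X : Set A} {hX : ∀ w ∈ X, star w ∈ X} {x : A} :
    x ∈ annihilator hX ↔ ∀ w ∈ X, w * x = 0 ∧ x * w = 0 := Iff.rfl

end FiniteDimensionalSubalgebras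

section MinimalProjections

variable {A : Type*} [NonUnitalCStarAlgebra A]

/-- `e` is a minimal projection of `C`, that is, a nonzero projection with `e C e = ℂ e`. -/
structure IsMinimalProjection (C : NonUnitalStarSubalgebra ℂ A) (e : A) : Prop where
  mem : e ∈ C
  isStarProjection : IsStarProjection e
  ne_zero : e ≠ 0
  exists_smul : ∀ a ∈ C, ∃ c : ℂ, e * a * e = c • e

variable (C : NonUnitalStarSubalgebra ℂ A) [FiniteDimensional ℂ C]

-- If `l` is an eigenvalue of `x` in the corner of `e`, the annihilator of `x - l e` there is
-- nonzero, hence has a nonzero unit, which must be `e`.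
lemma isMinimalProjection_of_forall_eq {e : A} (heC : e ∈ C) (he : IsStarProjection e)
    (he0 : e ≠ 0) (hmin : ∀ u ∈ C, IsStarProjection u → u ∈ corner he.isSelfAdjoint → u ≠ 0 →
      u = e) : IsMinimalProjection C e := by
  have hee : e * e = e := he.isIdempotentElem
  refine ⟨heC, he, he0, fun a ha => ?_⟩
  let K := C ⊓ corner he.isSelfAdjoint
  have heK : e ∈ K := ⟨heC, hee, hee⟩
  have hxK : e * a * e ∈ K := ⟨mul_mem (mul_mem heC ha) heC,
    by rw [← mul_assoc, ← mul_assoc, hee], by rw [mul_assoc, hee]⟩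
  have : Nontrivial K := ⟨⟨e, heK⟩, 0, fun h => he0 congr(($h : A))⟩
  obtain ⟨l, hl⟩ := Module.End.exists_eigenvalue (LinearMap.mulLeft ℂ (⟨e * a * e, hxK⟩ : K))
  obtain ⟨⟨y, hyK⟩, hy⟩ := hl.exists_hasEigenvector
  have hy0 : y ≠ 0 := fun h => hy.2 (Subtype.ext h)
  set g := e * a * e - l • e with hg
  have hgK : g ∈ K := sub_mem hxK (SMulMemClass.smul_mem l heK)
  have hgy : g * y = 0 := by
    have hxy : e * a * e * y = l • y := congr(($hy.apply_eq_smul : A))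
    rw [hg, sub_mul, hxy, smul_mul_assoc, hyK.2.1, sub_self]
  let N := K ⊓ annihilator (X := {star g * g}) (by simp)
  have hyN : y * star y ∈ N := by
    refine ⟨mul_mem hyK (star_mem hyK), ?_⟩
    rintro _ rfl
    have hgy' : star y * star g = 0 := by simpa using congr(star $hgy)
    simp only [← mul_assoc, mul_assoc _ g y, hgy, mul_zero, zero_mul, true_and]
    simp only [mul_assoc y, hgy', mul_zero, zero_mul]
  obtain ⟨u, huN, hu, hunit⟩ := exists_unit_of_finiteDimensional N
  have hu0 : u ≠ 0 := by
    rintro rfl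
    exact hy0 ((CStarRing.mul_star_self_eq_zero_iff y).mp
      ((hunit _ hyN).1.symm.trans (zero_mul _)))
  obtain rfl := hmin u huN.1.1 hu huN.1.2 hu0
  have hgg : star g * g = 0 := by
    have := (huN.2 _ rfl).1
    rwa [mul_assoc, hgK.2.2] at this
  exact ⟨l, sub_eq_zero.mp (CStarRing.star_mul_self_eq_zero_iff g |>.mp hgg)⟩

lemma finrank_corner_lt {e u : A} (heC : e ∈ C) (he : IsStarProjection e)
    (hu : IsStarProjection u) (hue : u ∈ corner he.isSelfAdjoint) (hne : u ≠ e) :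
    Module.finrank ℂ (C ⊓ corner hu.isSelfAdjoint : NonUnitalStarSubalgebra ℂ A) <
      Module.finrank ℂ (C ⊓ corner he.isSelfAdjoint : NonUnitalStarSubalgebra ℂ A) := by
  have : FiniteDimensional ℂ (C ⊓ corner he.isSelfAdjoint).toSubmodule :=
    finiteDimensional_inf C (corner he.isSelfAdjoint)
  refine Submodule.finrank_lt_finrank_of_lt (s := (C ⊓ corner hu.isSelfAdjoint).toSubmodule)
    (t := (C ⊓ corner he.isSelfAdjoint).toSubmodule) (lt_of_le_of_ne ?_ fun h => ?_)
  · rintro x ⟨hxC, hux, hxu⟩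
    exact ⟨hxC, by rw [← hux, ← mul_assoc, hue.1], by rw [← hxu, mul_assoc, hue.2]⟩
  · have heu : e ∈ (C ⊓ corner hu.isSelfAdjoint).toSubmodule :=
      h ▸ ⟨heC, he.isIdempotentElem, he.isIdempotentElem⟩
    exact hne (hue.2.symm.trans heu.2.1)

lemma exists_finset_isMinimalProjection {e : A} (heC : e ∈ C) (he : IsStarProjection e) :
    ∃ F : Finset A, (∀ f ∈ F, IsMinimalProjection C f ∧ f ∈ corner he.isSelfAdjoint) ∧
      (F : Set A).Pairwise (fun f g => f * g = 0) ∧ ∑ f ∈ F, f = e := by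
  classical
  induction hd : Module.finrank ℂ (C ⊓ corner he.isSelfAdjoint : NonUnitalStarSubalgebra ℂ A)
    using Nat.strong_induction_on generalizing e with
  | _ d ih =>
  subst hd
  by_cases he0 : e = 0
  · exact ⟨∅, by simp, by simp, by simp [he0]⟩
  by_cases hmin : ∀ u ∈ C, IsStarProjection u → u ∈ corner he.isSelfAdjoint → u ≠ 0 → u = e
  · exact ⟨{e}, by simpa [mem_corner, he.isIdempotentElem.eq] using
      isMinimalProjection_of_forall_eq C heC he he0 hmin, by simp, by simp⟩
  push Not at hmin
  obtain ⟨u, huC, hu, hue, hu0, hne⟩ := hmin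
  have hv : IsStarProjection (e - u) := hu.sub_of_mul_eq_left he hue.2
  have hve : e - u ∈ corner he.isSelfAdjoint :=
    sub_mem ⟨he.isIdempotentElem, he.isIdempotentElem⟩ hue
  have hvu : (e - u) * u = 0 := by rw [sub_mul, hue.1, hu.isIdempotentElem.eq, sub_self]
  obtain ⟨F, hF, hFF, hFsum⟩ := ih _ (finrank_corner_lt C heC he hu hue hne) huC hu rfl
  obtain ⟨G, hG, hGG, hGsum⟩ := ih _ (finrank_corner_lt C heC he hv hve (by simpa using hu0))
    (sub_mem heC huC) hv rfl
  have hGF : ∀ g ∈ G, ∀ f ∈ F, g * f = 0 := fun g hg f hf => by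
    rw [← (hG g hg).2.2, ← (hF f hf).2.1, mul_assoc, ← mul_assoc _ u, hvu, zero_mul, mul_zero]
  have hFG : ∀ f ∈ F, ∀ g ∈ G, f * g = 0 := fun f hf g hg => by
    simpa [(hF f hf).1.isStarProjection.isSelfAdjoint.star_eq,
      (hG g hg).1.isStarProjection.isSelfAdjoint.star_eq] using congr(star $(hGF g hg f hf))
  have hdisj : Disjoint F G := Finset.disjoint_left.mpr fun f hf hg =>
    (hF f hf).1.ne_zero ((hF f hf).1.isStarProjection.isIdempotentElem.symm.trans (hFG f hf f hg))
  refine ⟨F ∪ G, fun f hf => ?_, ?_, ?_⟩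
  · rcases Finset.mem_union.mp hf with hf | hf
    · exact ⟨(hF f hf).1, by rw [← (hF f hf).2.1, ← mul_assoc, hue.1],
        by rw [← (hF f hf).2.2, mul_assoc, hue.2]⟩
    · exact ⟨(hG f hf).1, by rw [← (hG f hf).2.1, ← mul_assoc, hve.1],
        by rw [← (hG f hf).2.2, mul_assoc, hve.2]⟩
  · rw [Finset.coe_union, Set.pairwise_union]
    exact ⟨hFF, hGG, fun f hf g hg _ => ⟨hFG f hf g hg, hGF g hg f hf⟩⟩
  · rw [Finset.sum_union hdisj, hFsum, hGsum, add_sub_cancel]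

lemma exists_isMinimalProjection {e : A} (heC : e ∈ C) (he : IsStarProjection e) (he0 : e ≠ 0) :
    ∃ f ∈ corner he.isSelfAdjoint, IsMinimalProjection C f := by
  obtain ⟨F, hF, -, hsum⟩ := exists_finset_isMinimalProjection C heC he
  obtain ⟨f, hf⟩ : F.Nonempty := Finset.nonempty_of_sum_ne_zero (hsum.trans_ne he0)
  exact ⟨f, (hF f hf).2, (hF f hf).1⟩

end MinimalProjections

section MatrixUnits

variable {A B : Type*} [NonUnitalCStarAlgebra A] [NonUnitalCStarAlgebra B] {J T : Type*}

/-- Pairs of indices lying in the same block, where `s` assigns its block to each index. -/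
abbrev Linked (s : J → T) := {p : J × J // s p.1 = s p.2}

noncomputable instance Linked.fintype [Finite J] (s : J → T) : Fintype (Linked s) :=
  Fintype.ofFinite _

/-- Matrix units of a direct sum of full matrix algebras: `s` assigns its block to each index and
`e α β`, for `α` and `β` in the same block, is the unit at position `(α, β)` of that block. The
entries of `e` at pairs of indices from different blocks are junk. -/
structure IsMatrixUnits (s : J → T) (e : J → J → A) : Prop where
  ne_zero : ∀ α, e α α ≠ 0
  mul : ∀ {α β γ}, s α = s β → s β = s γ → e α β * e β γ = e α γ
  mul_eq_zero : ∀ {α β γ δ}, s α = s β → s γ = s δ → β ≠ γ → e α β * e γ δ = 0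
  star : ∀ {α β}, s α = s β → star (e α β) = e β α

/-- The compressions of `b` by the diagonal units `e α α` and `e β β` of a common block are scalar
multiples of `e α β`. -/
def HasScalarEntries (s : J → T) (e : J → J → A) (b : A) : Prop :=
  ∀ α β, s α = s β → ∃ c : ℂ, e α α * b * e β β = c • e α β

namespace IsMatrixUnits

variable {s : J → T} {e : J → J → A}

lemma isStarProjection (h : IsMatrixUnits s e) (α : J) : IsStarProjection (e α α) :=
  ⟨h.mul rfl rfl, h.star rfl⟩

lemma ne_zero_of_eq (h : IsMatrixUnits s e) {α β : J} (hs : s α = s β) : e α β ≠ 0 := fun h0 =>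
  h.ne_zero α (by rw [← h.mul hs hs.symm, h0, zero_mul])

lemma comp {K T' : Type*} (h : IsMatrixUnits s e) {f : K → J} (hf : Function.Injective f)
    {s' : K → T'} (hs : ∀ {x y}, s' x = s' y → s (f x) = s (f y)) :
    IsMatrixUnits s' (fun x y => e (f x) (f y)) where
  ne_zero _ := h.ne_zero _
  mul hxy hyz := h.mul (hs hxy) (hs hyz)
  mul_eq_zero hxy hzw hne := h.mul_eq_zero (hs hxy) (hs hzw) (hf.ne hne)
  star hxy := h.star (hs hxy)

/-- The *-algebra spanned by the matrix units. -/
def algebra (h : IsMatrixUnits s e) : NonUnitalStarSubalgebra ℂ A where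
  toSubmodule := Submodule.span ℂ (Set.range fun p : Linked s => e p.1.1 p.1.2)
  mul_mem' {x y} hx hy := by
    induction hx, hy using Submodule.span_induction₂ with
    | mem_mem x y hx hy =>
      obtain ⟨⟨⟨α, β⟩, hp⟩, rfl⟩ := hx
      obtain ⟨⟨⟨γ, δ⟩, hq⟩, rfl⟩ := hy
      by_cases hβγ : β = γ
      · subst hβγ
        exact (h.mul hp hq).symm ▸ Submodule.subset_span ⟨⟨(α, δ), hp.trans hq⟩, rfl⟩
      · exact (h.mul_eq_zero hp hq hβγ).symm ▸ Submodule.zero_mem _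
    | zero_left => simp
    | zero_right => simp
    | add_left x y z _ _ _ hxz hyz => exact add_mul x y z ▸ Submodule.add_mem _ hxz hyz
    | add_right x y z _ _ _ hxy hxz => exact mul_add x y z ▸ Submodule.add_mem _ hxy hxz
    | smul_left c x y _ _ hxy => exact smul_mul_assoc c x y ▸ Submodule.smul_mem _ c hxy
    | smul_right c x y _ _ hxy => exact mul_smul_comm c x y ▸ Submodule.smul_mem _ c hxy
  star_mem' {x} hx := by
    induction hx using Submodule.span_induction with
    | mem x hx =>
      obtain ⟨⟨⟨α, β⟩, hp⟩, rfl⟩ := hx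
      exact (h.star hp).symm ▸ Submodule.subset_span ⟨⟨(β, α), hp.symm⟩, rfl⟩
    | zero => simp
    | add x y _ _ hx hy => exact star_add x y ▸ Submodule.add_mem _ hx hy
    | smul c x _ hx => exact star_smul c x ▸ Submodule.smul_mem _ _ hx

instance [Finite J] (h : IsMatrixUnits s e) : FiniteDimensional ℂ h.algebra :=
  FiniteDimensional.span_of_finite ℂ (Set.finite_range _)

end IsMatrixUnits

/-- A functional taking the value `1` at `x`; its value is junk for `x = 0`. -/
noncomputable def coeff (x : A) : StrongDual ℂ A := Classical.epsilon fun f => f x = 1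

lemma coeff_self {x : A} (hx : x ≠ 0) : coeff x x = 1 :=
  Classical.epsilon_spec (SeparatingDual.exists_eq_one hx)

section Transfer

variable [Finite J] {s : J → T} {e : J → J → A} {f : J → J → B}

/-- The map reading off the entries of an element with respect to the matrix units `e` and using
them as coefficients of `f`. It is meaningful on elements with scalar entries. -/
noncomputable def transfer (s : J → T) (e : J → J → A) (f : J → J → B) : A →ₗ[ℂ] B :=
  ∑ p : Linked s, ((coeff (e p.1.1 p.1.2)).toLinearMap ∘ₗ LinearMap.mulRight ℂ (e p.1.2 p.1.2) ∘ₗ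
    LinearMap.mulLeft ℂ (e p.1.1 p.1.1)).smulRight (f p.1.1 p.1.2)

lemma transfer_apply (b : A) : transfer s e f b = ∑ p : Linked s,
    coeff (e p.1.1 p.1.2) (e p.1.1 p.1.1 * b * e p.1.2 p.1.2) • f p.1.1 p.1.2 := by
  simp [transfer, LinearMap.sum_apply]

lemma transfer_eq_zero {b : A} (hb : ∀ {γ δ}, s γ = s δ → e γ γ * b * e δ δ = 0) :
    transfer s e f b = 0 := by
  rw [transfer_apply]
  exact Finset.sum_eq_zero fun p _ => by rw [hb p.2, map_zero, zero_smul]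

lemma transfer_eq (he : IsMatrixUnits s e) {b : A} {α β : J} (hs : s α = s β)
    (hb : e α α * b * e β β = e α β)
    (h0 : ∀ {γ δ}, s γ = s δ → (γ ≠ α ∨ δ ≠ β) → e γ γ * b * e δ δ = 0) :
    transfer s e f b = f α β := by
  rw [transfer_apply, Finset.sum_eq_single_of_mem ⟨(α, β), hs⟩ (Finset.mem_univ _)]
  · simp only [hb, coeff_self (he.ne_zero_of_eq hs), one_smul]
  · rintro ⟨⟨γ, δ⟩, hp⟩ - hne
    have hne' : γ ≠ α ∨ δ ≠ β := by
      contrapose! hne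
      simp only [hne]
    simp only [h0 hp hne', map_zero, zero_smul]

lemma transfer_unit (he : IsMatrixUnits s e) {α β : J} (hs : s α = s β) :
    transfer s e f (e α β) = f α β := by
  refine transfer_eq he hs (by rw [he.mul rfl hs, he.mul hs rfl]) fun {γ δ} _ hne => ?_
  rcases hne with hγ | hδ
  · rw [he.mul_eq_zero rfl hs hγ, zero_mul]
  · rw [mul_assoc, he.mul_eq_zero hs rfl hδ.symm, mul_zero]

lemma transfer_mul_right {q : A} (hq : ∀ α, q * e α α = e α α) (b : A) :
    transfer s e f (b * q) = transfer s e f b := by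
  simp only [transfer_apply, mul_assoc, hq]

lemma transfer_mul_left {q : A} (hq : ∀ α, e α α * q = e α α) (b : A) :
    transfer s e f (q * b) = transfer s e f b := by
  simp only [transfer_apply, ← mul_assoc, hq]

lemma transfer_transfer (he : IsMatrixUnits s e) (hf : IsMatrixUnits s f) {a : A}
    (ha : a ∈ he.algebra) : transfer s f e (transfer s e f a) = a := by
  induction ha using Submodule.span_induction with
  | mem x hx =>
    obtain ⟨p, rfl⟩ := hx
    rw [transfer_unit he p.2, transfer_unit hf p.2]
  | zero => simp
  | add x y _ _ hx hy => rw [map_add, map_add, hx, hy]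
  | smul c x _ hx => rw [map_smul, map_smul, hx]

lemma transfer_mem {N : NonUnitalStarSubalgebra ℂ B} (hf : ∀ α β, s α = s β → f α β ∈ N)
    (b : A) : transfer s e f b ∈ N := by
  rw [transfer_apply]
  exact sum_mem fun p _ => SMulMemClass.smul_mem _ (hf _ _ p.2)

lemma norm_map_le_of_map_mul_of_map_star (C : NonUnitalStarSubalgebra ℂ A)
    [FiniteDimensional ℂ C] (φ : A →ₗ[ℂ] B) (hmul : ∀ x ∈ C, ∀ y ∈ C, φ (x * y) = φ x * φ y)
    (hstar : ∀ x ∈ C, φ (star x) = star (φ x)) {x : A} (hx : x ∈ C) : ‖φ x‖ ≤ ‖x‖ := by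
  have : IsClosed (C : Set A) := isClosed_of_finiteDimensional C
  let ψ : C →⋆ₙₐ[ℂ] B :=
    { toFun x := φ x
      map_smul' c x := map_smul φ c (x : A)
      map_zero' := map_zero φ
      map_add' x y := map_add φ (x : A) y
      map_mul' x y := hmul _ x.2 _ y.2
      map_star' x := hstar _ x.2 }
  exact NonUnitalStarAlgHom.norm_apply_le ψ ⟨x, hx⟩

lemma transfer_mul (he : IsMatrixUnits s e) (hf : IsMatrixUnits s f) {x y : A}
    (hx : x ∈ he.algebra) (hy : y ∈ he.algebra) :
    transfer s e f (x * y) = transfer s e f x * transfer s e f y := by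
  induction hx, hy using Submodule.span_induction₂ with
  | mem_mem x y hx hy =>
    obtain ⟨⟨⟨α, β⟩, hp⟩, rfl⟩ := hx
    obtain ⟨⟨⟨γ, δ⟩, hq⟩, rfl⟩ := hy
    rw [transfer_unit he hp, transfer_unit he hq]
    by_cases hβγ : β = γ
    · subst hβγ
      rw [he.mul hp hq, hf.mul hp hq, transfer_unit he (hp.trans hq)]
    · rw [he.mul_eq_zero hp hq hβγ, hf.mul_eq_zero hp hq hβγ, map_zero]
  | zero_left => simp
  | zero_right => simp
  | add_left x y z _ _ _ hxz hyz => rw [add_mul, map_add, map_add, hxz, hyz, add_mul]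
  | add_right x y z _ _ _ hxy hxz => rw [mul_add, map_add, map_add, hxy, hxz, mul_add]
  | smul_left c x y _ _ hxy => rw [smul_mul_assoc, map_smul, map_smul, hxy, smul_mul_assoc]
  | smul_right c x y _ _ hxy => rw [mul_smul_comm, map_smul, map_smul, hxy, mul_smul_comm]

lemma transfer_star (he : IsMatrixUnits s e) (hf : IsMatrixUnits s f) {x : A}
    (hx : x ∈ he.algebra) : transfer s e f (star x) = star (transfer s e f x) := by
  induction hx using Submodule.span_induction with
  | mem x hx =>
    obtain ⟨⟨⟨α, β⟩, hp⟩, rfl⟩ := hx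
    rw [he.star hp, transfer_unit he hp, transfer_unit he hp.symm, hf.star hp]
  | zero => simp
  | add x y _ _ hx hy => rw [star_add, map_add, map_add, hx, hy, star_add]
  | smul c x _ hx => rw [star_smul, map_smul, map_smul, hx, star_smul]

lemma norm_transfer_le_of_mem_algebra (he : IsMatrixUnits s e) (hf : IsMatrixUnits s f) {x : A}
    (hx : x ∈ he.algebra) : ‖transfer s e f x‖ ≤ ‖x‖ :=
  norm_map_le_of_map_mul_of_map_star he.algebra _ (fun _ hx _ hy => transfer_mul he hf hx hy)
    (fun _ hx => transfer_star he hf hx) hx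

open scoped Classical in
/-- The unit of the block `t` of the algebra spanned by the matrix units `e`. -/
noncomputable def blockUnit (s : J → T) (e : J → J → A) (t : T) : A :=
  letI := Fintype.ofFinite J
  ∑ α with s α = t, e α α

lemma isStarProjection_sum {ι : Type*} (F : Finset ι) {q : ι → A}
    (hq : ∀ i ∈ F, IsStarProjection (q i)) (horth : (F : Set ι).Pairwise fun i j => q i * q j = 0) :
    IsStarProjection (∑ i ∈ F, q i) := by
  classical
  induction F using Finset.induction_on with
  | empty => simp [IsStarProjection.zero]
  | insert a F ha ih =>
    rw [Finset.coe_insert] at horth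
    rw [Finset.sum_insert ha]
    refine (hq a (Finset.mem_insert_self a F)).add
      (ih (fun i hi => hq i (Finset.mem_insert_of_mem hi)) (horth.mono (Set.subset_insert _ _))) ?_
    rw [Finset.mul_sum]
    exact Finset.sum_eq_zero fun j hj => horth (Set.mem_insert a _)
      (Set.mem_insert_of_mem _ hj) fun h => ha (h ▸ hj)

lemma isStarProjection_blockUnit (he : IsMatrixUnits s e) (t : T) :
    IsStarProjection (blockUnit s e t) :=
  isStarProjection_sum _ (fun α _ => he.isStarProjection α)
    fun _ _ _ _ hne => he.mul_eq_zero rfl rfl hne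

lemma mul_blockUnit (he : IsMatrixUnits s e) (α : J) : e α α * blockUnit s e (s α) = e α α := by
  classical
  rw [blockUnit, Finset.mul_sum, Finset.sum_eq_single_of_mem α (by simp)
    fun β _ hβ => he.mul_eq_zero rfl rfl hβ.symm, he.mul rfl rfl]

lemma mul_blockUnit_of_ne (he : IsMatrixUnits s e) {α : J} {t : T} (ht : s α ≠ t) :
    e α α * blockUnit s e t = 0 := by
  classical
  rw [blockUnit, Finset.mul_sum]
  exact Finset.sum_eq_zero fun β hβ => he.mul_eq_zero rfl rfl
    fun h => ht (h ▸ (Finset.mem_filter.mp hβ).2)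

lemma blockUnit_mul (he : IsMatrixUnits s e) (α : J) : blockUnit s e (s α) * e α α = e α α := by
  simpa [(isStarProjection_blockUnit he _).isSelfAdjoint.star_eq, he.star] using
    congr(star $(mul_blockUnit he α))

lemma blockUnit_mul_blockUnit_of_ne (he : IsMatrixUnits s e) {t t' : T} (ht : t ≠ t') :
    blockUnit s e t * blockUnit s e t' = 0 := by
  classical
  rw [blockUnit, Finset.sum_mul]
  exact Finset.sum_eq_zero fun α hα =>
    mul_blockUnit_of_ne he ((Finset.mem_filter.mp hα).2.trans_ne ht)

lemma norm_sum_mul_mul_le {ι : Type*} (F : Finset ι) {q : ι → A}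
    (hq : ∀ i ∈ F, IsStarProjection (q i)) (horth : (F : Set ι).Pairwise fun i j => q i * q j = 0)
    (b : A) : ‖∑ i ∈ F, q i * b * q i‖ ≤ ‖b‖ := by
  have hstar {i : ι} (hi : i ∈ F) : star (q i) = q i := (hq i hi).isSelfAdjoint
  refine norm_sum_le_of_orthogonal F _ (norm_nonneg b) (fun i hi j hj hij => ?_)
    (fun i hi j hj hij => ?_) fun i hi => ?_
  · simp only [star_mul, hstar hi, mul_assoc]
    simp only [← mul_assoc (q i) (q j), horth hi hj hij, zero_mul, mul_zero]
  · simp only [star_mul, hstar hj, mul_assoc]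
    simp only [← mul_assoc (q i) (q j), horth hi hj hij, zero_mul, mul_zero]
  · calc ‖q i * b * q i‖ ≤ ‖q i‖ * ‖b‖ * ‖q i‖ := norm_mul₃_le
      _ ≤ 1 * ‖b‖ * 1 := by gcongr <;> exact IsStarProjection.norm_le _ (hq i hi)
      _ = ‖b‖ := by rw [one_mul, mul_one]

-- Pinching `b` by the block units is contractive, lands in the span of the matrix units and does
-- not change the entries that `transfer` sees; on that span `transfer` is a *-homomorphism.
lemma norm_transfer_le (he : IsMatrixUnits s e) (hf : IsMatrixUnits s f) {b : A}
    (hb : HasScalarEntries s e b) : ‖transfer s e f b‖ ≤ ‖b‖ := by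
  classical
  have := Fintype.ofFinite J
  set b' := ∑ t ∈ Finset.univ.image s, blockUnit s e t * b * blockUnit s e t with hb'
  have hentry (p : Linked s) :
      e p.1.1 p.1.1 * b' * e p.1.2 p.1.2 = e p.1.1 p.1.1 * b * e p.1.2 p.1.2 := by
    obtain ⟨⟨α, β⟩, hp⟩ := p
    rw [hb', Finset.mul_sum, Finset.sum_mul, Finset.sum_eq_single_of_mem (s α) (by simp)]
    · calc e α α * (blockUnit s e (s α) * b * blockUnit s e (s α)) * e β β
          = (e α α * blockUnit s e (s α)) * b * (blockUnit s e (s β) * e β β) := by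
            simp only [mul_assoc, show s α = s β from hp]
        _ = e α α * b * e β β := by rw [mul_blockUnit he, blockUnit_mul he]
    · intro t _ ht
      rw [← mul_assoc, ← mul_assoc, mul_blockUnit_of_ne he ht.symm, zero_mul, zero_mul, zero_mul]
  have hmem : b' ∈ he.algebra := by
    refine sum_mem fun t _ => ?_
    simp only [blockUnit, Finset.sum_mul, Finset.mul_sum]
    refine sum_mem fun β hβ => sum_mem fun α hα => ?_
    have hp : s α = s β := (Finset.mem_filter.mp hα).2.trans (Finset.mem_filter.mp hβ).2.symm
    obtain ⟨c, hc⟩ := hb α β hp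
    exact hc ▸ SMulMemClass.smul_mem c (Submodule.subset_span ⟨⟨(α, β), hp⟩, rfl⟩)
  calc ‖transfer s e f b‖ = ‖transfer s e f b'‖ := by simp only [transfer_apply, hentry]
    _ ≤ ‖b'‖ := norm_transfer_le_of_mem_algebra he hf hmem
    _ ≤ ‖b‖ := norm_sum_mul_mul_le _ (fun t _ => isStarProjection_blockUnit he t)
      (fun _ _ _ _ hne => blockUnit_mul_blockUnit_of_ne he hne) b

end Transfer

end MatrixUnits

section MurrayVonNeumann

variable {A : Type*} [NonUnitalCStarAlgebra A] {C : NonUnitalStarSubalgebra ℂ A}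

lemma mul_star_mul_self_of_isIdempotentElem {v : A} (h : IsIdempotentElem (star v * v)) :
    v * (star v * v) = v := by
  have hvv : star v * v * (star v * v) = star v * v := h
  refine sub_eq_zero.mp ((CStarRing.star_mul_self_eq_zero_iff _).mp ?_)
  simp only [star_sub, star_mul, star_star, sub_mul, mul_sub, ← mul_assoc] at hvv ⊢
  simp only [hvv, sub_self]

variable (C) in
/-- Murray–von Neumann equivalence of projections, implemented by a partial isometry in `C`. -/
def MvNEquiv (f g : A) : Prop := ∃ v ∈ C, v * star v = f ∧ star v * v = g

namespace MvNEquiv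

lemma refl {f : A} (hf : f ∈ C) (hpf : IsStarProjection f) : MvNEquiv C f f :=
  ⟨f, hf, by rw [hpf.isSelfAdjoint.star_eq, hpf.isIdempotentElem.eq],
    by rw [hpf.isSelfAdjoint.star_eq, hpf.isIdempotentElem.eq]⟩

lemma symm {f g : A} : MvNEquiv C f g → MvNEquiv C g f := fun ⟨v, hv, hf, hg⟩ =>
  ⟨star v, star_mem hv, by rw [star_star, hg], by rw [star_star, hf]⟩

lemma trans {f g h : A} (hg : IsIdempotentElem g) :
    MvNEquiv C f g → MvNEquiv C g h → MvNEquiv C f h := by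
  rintro ⟨v, hv, rfl, rfl⟩ ⟨w, hw, hwg, rfl⟩
  refine ⟨v * w, mul_mem hv hw, ?_, ?_⟩
  · calc v * w * star (v * w) = v * (w * star w) * star v := by simp only [star_mul, mul_assoc]
      _ = v * star v := by rw [hwg, mul_star_mul_self_of_isIdempotentElem hg]
  · have hw' := mul_star_mul_self_of_isIdempotentElem (v := star w) (by rwa [star_star, hwg])
    rw [star_star, hwg] at hw'
    calc star (v * w) * (v * w) = star w * (star v * v) * w := by
          simp only [star_mul, mul_assoc]
      _ = star w * w := by rw [hw']

end MvNEquiv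

namespace IsMinimalProjection

lemma exists_star_mul_self_eq {g y : A} (hg : IsMinimalProjection C g) (hy : y ∈ C)
    (hyg : y * g = y) (hy0 : y ≠ 0) : ∃ r : ℝ, 0 < r ∧ star y * y = (r : ℂ) • g := by
  have hgs : star g = g := hg.isStarProjection.isSelfAdjoint
  have hgy : g * star y = star y := by simpa [hgs] using congr(star $hyg)
  have hyy : star y * y ≠ 0 := (CStarRing.star_mul_self_eq_zero_iff y).not.mpr hy0
  obtain ⟨c, hc⟩ := hg.exists_smul _ (mul_mem (star_mem hy) hy)
  rw [← mul_assoc, hgy, mul_assoc, hyg] at hc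
  have hcstar : star c = c := by
    refine smul_left_injective ℂ hg.ne_zero (Eq.trans ?_ hc)
    simpa [hgs] using congr(star $hc).symm
  obtain ⟨r, rfl⟩ : ∃ r : ℝ, (r : ℂ) = c := ⟨c.re, Complex.conj_eq_iff_re.mp hcstar⟩
  refine ⟨r, lt_of_not_ge fun hr => hyy ?_, hc⟩
  let _ : PartialOrder A := CStarAlgebra.spectralOrder A
  have : StarOrderedRing A := CStarAlgebra.spectralOrderedRing A
  refine le_antisymm ?_ (star_mul_self_nonneg y)
  rw [hc, Complex.coe_smul]
  exact smul_nonpos_of_nonpos_of_nonneg hr hg.isStarProjection.nonneg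

lemma mvNEquiv {f g x : A} (hf : IsMinimalProjection C f) (hg : IsMinimalProjection C g)
    (hx : x ∈ C) (h0 : f * x * g ≠ 0) : MvNEquiv C f g := by
  set y := f * x * g with hy
  have hyC : y ∈ C := mul_mem (mul_mem hf.mem hx) hg.mem
  have hfy : f * y = y := by rw [hy, ← mul_assoc, ← mul_assoc, hf.isStarProjection.1.eq]
  have hyg : y * g = y := by rw [hy, mul_assoc, hg.isStarProjection.1.eq]
  have hyf : star y * f = star y := by
    simpa [hf.isStarProjection.isSelfAdjoint.star_eq] using congr(star $hfy)
  obtain ⟨c, hc, hyy⟩ := hg.exists_star_mul_self_eq hyC hyg h0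
  obtain ⟨d, -, hyy'⟩ := hf.exists_star_mul_self_eq (star_mem hyC) hyf (star_ne_zero.mpr h0)
  rw [star_star] at hyy'
  have hdc : (d : ℂ) = c := smul_left_injective ℂ h0 <|
    calc (d : ℂ) • y = y * star y * y := by rw [hyy', smul_mul_assoc, hfy]
      _ = (c : ℂ) • y := by rw [mul_assoc, hyy, mul_smul_comm, hyg]
  have hscale : star (((√c)⁻¹ : ℝ) : ℂ) * ((√c)⁻¹ : ℝ) * c = 1 := by
    rw [Complex.star_def, Complex.conj_ofReal]
    norm_cast
    rw [← mul_inv, Real.mul_self_sqrt hc.le, inv_mul_cancel₀ hc.ne']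
  refine ⟨(((√c)⁻¹ : ℝ) : ℂ) • y, SMulMemClass.smul_mem _ hyC, ?_, ?_⟩
  · rw [star_smul, smul_mul_smul_comm, hyy', smul_smul, hdc, mul_comm (_ : ℂ) (star _), hscale,
      one_smul]
  · rw [star_smul, smul_mul_smul_comm, hyy, smul_smul, hscale, one_smul]

end IsMinimalProjection

lemma isMatrixUnits_mul_star {Λ S : Type*} {σ : Λ → S} {v : Λ → A} {h : S → A}
    (hidem : ∀ t, IsIdempotentElem (h t)) (hne : ∀ l, v l ≠ 0)
    (hv : ∀ l, star (v l) * v l = h (σ l))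
    (horth : Pairwise fun l l' => star (v l) * v l' = 0) :
    IsMatrixUnits σ (fun l l' => v l * star (v l')) where
  ne_zero l := (CStarRing.mul_star_self_eq_zero_iff (v l)).not.mpr (hne l)
  mul {l l' l''} hs _ := by
    have hl : v l * h (σ l) = v l := by
      rw [← hv]
      exact mul_star_mul_self_of_isIdempotentElem (hv l ▸ hidem _)
    calc v l * star (v l') * (v l' * star (v l''))
        = v l * (star (v l') * v l') * star (v l'') := by simp only [mul_assoc]
      _ = v l * star (v l'') := by rw [hv, ← hs, hl]
  mul_eq_zero {l l' m m'} _ _ hne := by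
    calc v l * star (v l') * (v m * star (v m'))
        = v l * (star (v l') * v m) * star (v m') := by simp only [mul_assoc]
      _ = 0 := by rw [horth hne, mul_zero, zero_mul]
  star _ := by rw [star_mul, star_star]

variable (C) in
/-- Matrix units belonging to `C` whose diagonal entries are minimal projections of `C`. -/
structure IsMinimalMatrixUnits {Λ S : Type*} (σ : Λ → S) (g : Λ → Λ → A) : Prop
    extends IsMatrixUnits σ g where
  mem : ∀ {l l'}, σ l = σ l' → g l l' ∈ C
  hasScalarEntries : ∀ c ∈ C, HasScalarEntries σ g c

namespace IsMinimalMatrixUnits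

variable {Λ S : Type*} {σ : Λ → S} {g : Λ → Λ → A}

lemma isMinimalProjection (h : IsMinimalMatrixUnits C σ g) (l : Λ) :
    IsMinimalProjection C (g l l) :=
  ⟨h.mem rfl, h.isStarProjection l, h.ne_zero l, fun c hc => h.hasScalarEntries c hc l l rfl⟩

lemma comp {K S' : Type*} (h : IsMinimalMatrixUnits C σ g) {f : K → Λ}
    (hf : Function.Injective f) {σ' : K → S'} (hσ : ∀ {x y}, σ' x = σ' y → σ (f x) = σ (f y)) :
    IsMinimalMatrixUnits C σ' (fun x y => g (f x) (f y)) where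
  toIsMatrixUnits := h.toIsMatrixUnits.comp hf hσ
  mem hxy := h.mem (hσ hxy)
  hasScalarEntries c hc x y hxy := h.hasScalarEntries c hc (f x) (f y) (hσ hxy)

end IsMinimalMatrixUnits

-- The blocks are the equivalence classes of the projections; a unit within a block is composed of
-- two partial isometries through a representative of the class.
lemma exists_isMinimalMatrixUnits {Λ : Type u} (f : Λ → A)
    (hf : ∀ l, IsMinimalProjection C (f l)) (horth : Pairwise fun l l' => f l * f l' = 0) :
    ∃ (S : Type u) (σ : Λ → S) (g : Λ → Λ → A), Function.Surjective σ ∧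
      IsMinimalMatrixUnits C σ g ∧ (∀ l, g l l = f l) ∧
      ∀ c ∈ C, ∀ l l', σ l ≠ σ l' → f l * c * f l' = 0 := by
  have hproj (l : Λ) : IsStarProjection (f l) := (hf l).isStarProjection
  let R : Setoid Λ :=
    { r l l' := MvNEquiv C (f l) (f l')
      iseqv := ⟨fun l => .refl (hf l).mem (hproj l), .symm, .trans (hproj _).1⟩ }
  have hequiv (l : Λ) : MvNEquiv C (f l) (f (Quotient.mk R l).out) :=
    .symm (Quotient.mk_out (s := R) l)
  choose v hvC hvf hv using hequiv
  have hfv (l : Λ) : f l * v l = v l := by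
    rw [← hvf, mul_assoc]
    exact mul_star_mul_self_of_isIdempotentElem (hv l ▸ (hproj _).1)
  have hvf' (l : Λ) : star (v l) * f l = star (v l) := by
    simpa [(hproj l).isSelfAdjoint.star_eq] using congr(star $(hfv l))
  have hunits : IsMatrixUnits (Quotient.mk R) (fun l l' => v l * star (v l')) := by
    refine isMatrixUnits_mul_star (h := fun t => f t.out) (fun t => (hproj _).1) (fun l h0 => ?_) hv
      fun l l' hne => ?_
    · exact (hf l).ne_zero (by rw [← hvf, h0, zero_mul])
    · simp only
      rw [← hvf', ← hfv l', mul_assoc, ← mul_assoc (f l), horth hne, zero_mul, mul_zero]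
  refine ⟨Quotient R, Quotient.mk R, _, Quotient.mk_surjective, ⟨hunits,
    fun _ => mul_mem (hvC _) (star_mem (hvC _)), fun c hc l l' h => ?_⟩, hvf,
    fun c hc l l' hne => ?_⟩
  · obtain ⟨z, hz⟩ := (hf l).exists_smul (c * (v l' * star (v l)))
      (mul_mem hc (mul_mem (hvC l') (star_mem (hvC l))))
    have hunit : v l' * star (v l) * (v l * star (v l')) = f l' := by
      rw [hunits.mul h.symm h, hvf]
    refine ⟨z, ?_⟩
    simp only [hvf]
    calc f l * c * f l' = f l * c * (v l' * (star (v l) * f l) * (v l * star (v l'))) := by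
          rw [hvf', hunit]
      _ = f l * (c * (v l' * star (v l))) * f l * (v l * star (v l')) := by simp only [mul_assoc]
      _ = z • (v l * star (v l')) := by rw [hz, smul_mul_assoc, ← mul_assoc, hfv]
  · by_contra h0
    exact hne (Quotient.sound (s := R) ((hf l).mvNEquiv (hf l') hc h0))

end MurrayVonNeumann

section MinimalCentralProjections

variable {A : Type*} [NonUnitalCStarAlgebra A] {C : NonUnitalStarSubalgebra ℂ A}

lemma exists_central_unit_of_ideal {N : NonUnitalStarSubalgebra ℂ A} [FiniteDimensional ℂ N]
    (hleft : ∀ c ∈ C, ∀ x ∈ N, c * x ∈ N) (hright : ∀ c ∈ C, ∀ x ∈ N, x * c ∈ N) :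
    ∃ z ∈ N, IsStarProjection z ∧ (∀ x ∈ N, z * x = x) ∧ ∀ c ∈ C, z * c = c * z := by
  obtain ⟨z, hzN, hz, hunit⟩ := exists_unit_of_finiteDimensional N
  refine ⟨z, hzN, hz, fun x hx => (hunit x hx).1, fun c hc => ?_⟩
  rw [← (hunit _ (hright c hc z hzN)).2, mul_assoc, (hunit _ (hleft c hc z hzN)).1]

variable (C) in
/-- `p` is minimal among the nonzero central projections of `C`. -/
structure IsMinimalCentralProjection (p : A) : Prop where
  mem : p ∈ C
  isStarProjection : IsStarProjection p
  ne_zero : p ≠ 0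
  central : ∀ a ∈ C, p * a = a * p
  eq_of_le : ∀ q ∈ C, IsStarProjection q → (∀ a ∈ C, q * a = a * q) → q * p = q → q ≠ 0 → q = p

-- Otherwise `g` lies in the ideal of the elements of `C` orthogonal to `C f C`, and the unit of
-- this ideal cuts a nonzero proper central projection out of `p`.
lemma IsMinimalCentralProjection.exists_mul_mul_ne_zero [FiniteDimensional ℂ C] {p f g : A}
    (hp : IsMinimalCentralProjection C p) (hfC : f ∈ C) (hgC : g ∈ C) (hf : IsStarProjection f)
    (hg : IsStarProjection g) (hf0 : f ≠ 0) (hg0 : g ≠ 0) (hfp : f * p = f) (hgp : g * p = g) :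
    ∃ c ∈ C, f * c * g ≠ 0 := by
  by_contra! hfg
  have hgf (c : A) (hc : c ∈ C) : g * c * f = 0 := by
    simpa [hf.isSelfAdjoint.star_eq, hg.isSelfAdjoint.star_eq, mul_assoc] using
      congr(star $(hfg _ (star_mem hc)))
  let X : Set A := {w | ∃ c ∈ C, ∃ d ∈ C, c * f * d = w}
  have hX : ∀ w ∈ X, star w ∈ X := by
    rintro _ ⟨c, hc, d, hd, rfl⟩
    exact ⟨star d, star_mem hd, star c, star_mem hc,
      by simp only [star_mul, hf.isSelfAdjoint.star_eq, mul_assoc]⟩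
  let N := C ⊓ annihilator hX
  have hgN : g ∈ N := by
    refine ⟨hgC, mem_annihilator.mpr ?_⟩
    rintro _ ⟨c, hc, d, hd, rfl⟩
    exact ⟨by rw [mul_assoc, mul_assoc, ← mul_assoc f, hfg d hd, mul_zero],
      by rw [← mul_assoc, ← mul_assoc, hgf c hc, zero_mul]⟩
  obtain ⟨z, hzN, hz, hzunit, hzcentral⟩ := exists_central_unit_of_ideal (C := C) (N := N)
    (fun c hc x hx => ⟨mul_mem hc hx.1, mem_annihilator.mpr <| by
      rintro _ ⟨a, ha, d, hd, rfl⟩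
      exact ⟨by rw [← mul_assoc, mul_assoc _ d c]; exact (hx.2 _ ⟨a, ha, _, mul_mem hd hc, rfl⟩).1,
        by rw [mul_assoc, (hx.2 _ ⟨a, ha, d, hd, rfl⟩).2, mul_zero]⟩⟩)
    (fun c hc x hx => ⟨mul_mem hx.1 hc, mem_annihilator.mpr <| by
      rintro _ ⟨a, ha, d, hd, rfl⟩
      exact ⟨by rw [← mul_assoc, (hx.2 _ ⟨a, ha, d, hd, rfl⟩).1, zero_mul],
        by simpa only [mul_assoc] using (hx.2 _ ⟨c * a, mul_mem hc ha, d, hd, rfl⟩).2⟩⟩)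
  have hzp : z * p = p := by
    refine hp.eq_of_le _ (mul_mem hzN.1 hp.mem) (hz.mul hp.isStarProjection (hzcentral p hp.mem))
      (fun a ha => ?_) (by rw [mul_assoc, hp.isStarProjection.1.eq]) fun h0 => hg0 ?_
    · rw [mul_assoc, hp.central a ha, ← mul_assoc, hzcentral a ha, mul_assoc]
    · rw [← hzunit g hgN, ← hgp, ← hp.central g hgC, ← mul_assoc, h0, zero_mul]
  have hfz : f * z = 0 := by
    simpa [hf.1.eq] using (hzN.2 _ ⟨f, hfC, f, hfC, rfl⟩).1
  exact hf0 (by rw [← hfp, ← hzp, ← mul_assoc, hfz, zero_mul])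

end MinimalCentralProjections

section FermionTowers

variable {B : Type*} [NonUnitalCStarAlgebra B] {C : ℕ → NonUnitalStarSubalgebra ℂ B} {p : ℕ → B}

variable (C p) in
/-- An AF presentation `C` with the Fermion property witnessed by minimal central projections `p k`
of the algebras `C k` themselves, obtained from an arbitrary one by passing to a subsequence. -/
structure FermionTower : Prop where
  isAFPresentation : IsAFPresentation B C
  isMinimalCentralProjection : ∀ k, IsMinimalCentralProjection (C k) (p k)
  exists_proper : ∀ k e, IsMinimalProjection (C k) e → e * p k = e →
    ∃ q ∈ C (k + 1), IsStarProjection q ∧ q ≠ 0 ∧ q * (p (k + 1) * e) = q ∧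
      p (k + 1) * e * q = q ∧ q ≠ p (k + 1) * e

lemma isAFPresentation_comp {S : ℕ → NonUnitalStarSubalgebra ℂ B} (hS : IsAFPresentation B S)
    {n : ℕ → ℕ} (hn : StrictMono n) : IsAFPresentation B (S ∘ n) := by
  refine ⟨hS.1.comp hn.monotone, fun k => hS.2.1 (n k), hS.2.2.mono ?_⟩
  exact Set.iUnion_subset fun k =>
    Set.subset_iUnion_of_subset k (SetLike.coe_subset_coe.mpr (hS.1 hn.le_apply))

lemma exists_fermionTower {S : ℕ → NonUnitalStarSubalgebra ℂ B} (hS : IsAFPresentation B S)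
    (hF : HasFermionProperty B S) : ∃ C p, FermionTower (B := B) C p := by
  obtain ⟨n, p, hn, hmem, hproj, hne, hcentral, hmin, hstep⟩ := hF
  refine ⟨S ∘ n, p, isAFPresentation_comp hS hn, fun k => ⟨hmem k, ⟨(hproj k).1, (hproj k).2⟩,
    hne k, hcentral k, fun q hq hqp => hmin k q hq ⟨hqp.1, hqp.2⟩⟩, fun k e he hep => ?_⟩
  obtain ⟨-, q, hq, hqp, h⟩ := hstep k e he.mem
    ⟨he.isStarProjection.1, he.isStarProjection.2⟩ he.ne_zero hep he.exists_smul
  exact ⟨q, hq, ⟨hqp.1, hqp.2⟩, h⟩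

namespace FermionTower

variable (h : FermionTower C p)
include h

lemma exists_orthogonal_pair {k : ℕ} {e : B} (he : IsMinimalProjection (C k) e)
    (hep : e * p k = e) :
    ∃ f : Bool → B, (∀ i, IsMinimalProjection (C (k + 1)) (f i) ∧ f i * p (k + 1) = f i ∧
      e * f i = f i) ∧ Pairwise fun i j => f i * f j = 0 := by
  have := h.isAFPresentation.2.1 (k + 1)
  have hp := h.isMinimalCentralProjection (k + 1)
  obtain ⟨q, hqC, hq, hq0, hqle, hleq, hqne⟩ := h.exists_proper k e he hep
  have heC : e ∈ C (k + 1) := h.isAFPresentation.1 k.le_succ he.mem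
  set r := p (k + 1) * e with hr
  have hrC : r ∈ C (k + 1) := mul_mem hp.mem heC
  have hr' : IsStarProjection r := hp.isStarProjection.mul he.isStarProjection (hp.central e heC)
  have hunder {f : B} (hf : r * f = f) (hf' : IsStarProjection f) :
      f * p (k + 1) = f ∧ e * f = f := by
    have hfr : f * r = f := by
      simpa [hr'.isSelfAdjoint.star_eq, hf'.isSelfAdjoint.star_eq] using congr(star $hf)
    refine ⟨?_, ?_⟩
    · rw [← hfr, mul_assoc, ← hp.central r hrC, hr, ← mul_assoc (p _), hp.isStarProjection.1.eq]
    · rw [← hf, ← mul_assoc, hr, hp.central e heC, ← mul_assoc e, he.isStarProjection.1.eq]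
  have hd : IsStarProjection (r - q) := hq.sub_of_mul_eq_right hr' hleq
  obtain ⟨f, hfq, hf⟩ := exists_isMinimalProjection (C (k + 1)) hqC hq hq0
  obtain ⟨g, hgq, hg⟩ := exists_isMinimalProjection (C (k + 1)) (sub_mem hrC hqC) hd
    (sub_ne_zero.mpr hqne.symm)
  have hfg : f * g = 0 := by
    rw [← hfq.2, ← hgq.1, mul_assoc, ← mul_assoc q, mul_sub, hqle, hq.1.eq, sub_self, zero_mul,
      mul_zero]
  have hgf : g * f = 0 := by
    simpa [hf.isStarProjection.isSelfAdjoint.star_eq, hg.isStarProjection.isSelfAdjoint.star_eq]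
      using congr(star $hfg)
  refine ⟨fun i => cond i f g, Bool.forall_bool.mpr ⟨⟨hg, hunder ?_ hg.isStarProjection⟩,
    ⟨hf, hunder ?_ hf.isStarProjection⟩⟩, by simp [Pairwise, hfg, hgf]⟩
  · change r * g = g
    rw [← hgq.1, ← mul_assoc, mul_sub, hr'.1.eq, hleq]
  · change r * f = f
    rw [← hfq.1, ← mul_assoc, hleq]

lemma exists_orthogonal_family {k : ℕ} {e : B} (he : IsMinimalProjection (C k) e)
    (hep : e * p k = e) (j : ℕ) :
    ∃ f : (Fin j → Bool) → B, (∀ x, IsMinimalProjection (C (k + j)) (f x) ∧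
      f x * p (k + j) = f x ∧ e * f x = f x) ∧ Pairwise fun x y => f x * f y = 0 := by
  induction j with
  | zero => exact ⟨fun _ => e, fun _ => ⟨he, hep, he.isStarProjection.1⟩,
      fun x y hxy => absurd (Subsingleton.elim x y) hxy⟩
  | succ j ih =>
    obtain ⟨f, hf, horth⟩ := ih
    choose g hg hgorth using fun x => h.exists_orthogonal_pair (hf x).1 (hf x).2.1
    have hgf (x : Fin j → Bool) (i : Bool) : g x i * f x = g x i := by
      simpa [(hg x i).1.isStarProjection.isSelfAdjoint.star_eq,
        (hf x).1.isStarProjection.isSelfAdjoint.star_eq] using congr(star $((hg x i).2.2))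
    refine ⟨fun x => g (Fin.init x) (x (Fin.last j)), fun x => ⟨(hg _ _).1, (hg _ _).2.1, ?_⟩,
      fun x y hxy => ?_⟩
    · simp only
      rw [← (hg _ _).2.2, ← mul_assoc, (hf _).2.2]
    · simp only
      by_cases hinit : Fin.init x = Fin.init y
      · rw [hinit]
        refine hgorth _ fun hlast => hxy ?_
        rw [← Fin.snoc_init_self x, ← Fin.snoc_init_self y, hinit, hlast]
      · rw [← hgf, ← (hg (Fin.init y) _).2.2, mul_assoc, ← mul_assoc (f _), horth hinit, zero_mul,
          mul_zero]

lemma exists_isMinimalMatrixUnits {k : ℕ} {e : B} (he : IsMinimalProjection (C k) e)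
    (hep : e * p k = e) (Λ : Type*) [Finite Λ] :
    ∃ (m : ℕ) (g : Λ → Λ → B), k < m ∧ IsMinimalMatrixUnits (C m) (fun _ => ()) g ∧
      ∀ l, g l l * p m = g l l ∧ e * g l l = g l l := by
  have := Fintype.ofFinite Λ
  let j := Fintype.card Λ + 1
  have := h.isAFPresentation.2.1 (k + j)
  obtain ⟨ι⟩ : Nonempty (Λ ↪ (Fin j → Bool)) := by
    refine Function.Embedding.nonempty_of_card_le ?_
    simpa [j] using (Nat.le_succ _).trans Nat.lt_two_pow_self.le
  obtain ⟨f, hf, horth⟩ := h.exists_orthogonal_family he hep j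
  obtain ⟨S, σ, g, -, hg, hgf, hsep⟩ := FermionAF.exists_isMinimalMatrixUnits (C := C (k + j))
    (f ∘ ι) (fun l => (hf (ι l)).1) (horth.comp_of_injective ι.injective)
  have hσ (l l' : Λ) : σ l = σ l' := by
    by_contra hne
    obtain ⟨c, hc, hne'⟩ := (h.isMinimalCentralProjection (k + j)).exists_mul_mul_ne_zero
      (hf (ι l)).1.mem (hf (ι l')).1.mem (hf (ι l)).1.isStarProjection
      (hf (ι l')).1.isStarProjection (hf (ι l)).1.ne_zero (hf (ι l')).1.ne_zero
      (hf (ι l)).2.1 (hf (ι l')).2.1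
    exact hne' (hsep c hc l l' hne)
  refine ⟨k + j, g, by omega, hg.comp Function.injective_id fun _ => hσ _ _, fun l => ?_⟩
  rw [hgf]
  exact (hf (ι l)).2

end FermionTower

end FermionTowers

section TensorRefinement

variable {A : Type*} [NonUnitalCStarAlgebra A] {J T Λ S : Type*} {s : J → T} {e : J → J → A}
  {σ : Λ → S} {g : Λ → Λ → A} {t : Λ → J}

/-- The candidates for the matrix units of a refinement of `e`: if the units `g` live under the
diagonal units `e (t l) (t l)`, these are the units `e ⊗ g` of the algebra generated by both. They
are meaningful between the indices in `RefinedIndex s t`. -/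
def tens (e : J → J → A) (g : Λ → Λ → A) (t : Λ → J) (x y : J × Λ) : A :=
  e x.1 (t x.2) * g x.2 y.2 * e (t y.2) y.1

/-- The indices of the refinement of matrix units with labels `s` by matrix units living under the
diagonal positions `t`: a position in each block of `s` together with an index over that block. -/
abbrev RefinedIndex (s : J → T) (t : Λ → J) := {x : J × Λ // s x.1 = s (t x.2)}

noncomputable instance RefinedIndex.fintype [Finite J] [Finite Λ] (s : J → T) (t : Λ → J) :
    Fintype (RefinedIndex s t) :=
  Fintype.ofFinite _

/-- The matrix units `g` live under diagonal units of `e`, the projection `g l l` being a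
subprojection of `e (t l) (t l)`, and `t` selects at most one position in each block of `e`. -/
structure IsSubordinate (s : J → T) (e : J → J → A) (σ : Λ → S) (g : Λ → Λ → A) (t : Λ → J) :
    Prop where
  left : IsMatrixUnits s e
  right : IsMatrixUnits σ g
  mul_diag : ∀ l, e (t l) (t l) * g l l = g l l
  eq_of_eq : ∀ {l l'}, s (t l) = s (t l') → t l = t l'

lemma mul_tens (he : IsMatrixUnits s e) {α : J} {x : J × Λ} (hα : s α = s x.1)
    (hx : s x.1 = s (t x.2)) (y : J × Λ) : e α x.1 * tens e g t x y = tens e g t (α, x.2) y := by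
  rw [tens, ← mul_assoc, ← mul_assoc, he.mul hα hx, tens]

lemma mul_tens_of_ne (he : IsMatrixUnits s e) {α β : J} {x : J × Λ} (hα : s α = s β)
    (hx : s x.1 = s (t x.2)) (hne : β ≠ x.1) (y : J × Λ) : e α β * tens e g t x y = 0 := by
  rw [tens, ← mul_assoc, ← mul_assoc, he.mul_eq_zero hα hx hne, zero_mul, zero_mul]

namespace IsSubordinate

variable (h : IsSubordinate s e σ g t)
include h

lemma mul_of_eq {l l' : Λ} (hl : σ l = σ l') : e (t l) (t l) * g l l' = g l l' := by
  rw [← h.right.mul rfl hl, ← mul_assoc, h.mul_diag]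

lemma mul_of_eq' {l l' : Λ} (hl : σ l = σ l') : g l l' * e (t l') (t l') = g l l' := by
  simpa [h.right.star hl.symm, h.left.star] using congr(star $(h.mul_of_eq hl.symm))

lemma isMatrixUnits : IsMatrixUnits (fun x : RefinedIndex s t => σ x.1.2)
    (fun x y => tens e g t x.1 y.1) where
  ne_zero := by
    rintro ⟨⟨α, l⟩, hx⟩ h0
    refine h.right.ne_zero l ?_
    calc g l l = (e (t l) α * e α (t l)) * g l l * (e (t l) α * e α (t l)) := by
          rw [h.left.mul hx.symm hx, h.mul_of_eq rfl, h.mul_of_eq' rfl]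
      _ = e (t l) α * tens e g t (α, l) (α, l) * e α (t l) := by simp only [tens, mul_assoc]
      _ = 0 := by rw [h0, mul_zero, zero_mul]
  mul := by
    rintro ⟨⟨α, l⟩, hx⟩ ⟨⟨β, m⟩, hy⟩ ⟨⟨γ, n⟩, hz⟩ hxy hyz
    calc tens e g t (α, l) (β, m) * tens e g t (β, m) (γ, n)
        = e α (t l) * (g l m * (e (t m) β * e β (t m)) * g m n) * e (t n) γ := by
          simp only [tens, mul_assoc]
      _ = tens e g t (α, l) (γ, n) := by
          rw [h.left.mul hy.symm hy, h.mul_of_eq' hxy, h.right.mul hxy hyz, tens]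
  mul_eq_zero := by
    rintro ⟨⟨α, l⟩, hx⟩ ⟨⟨β, m⟩, hy⟩ ⟨⟨γ, n⟩, hz⟩ ⟨⟨δ, o⟩, hw⟩ hxy hzw hne
    have hassoc : tens e g t (α, l) (β, m) * tens e g t (γ, n) (δ, o)
        = e α (t l) * (g l m * (e (t m) β * e γ (t n)) * g n o) * e (t o) δ := by
      simp only [tens, mul_assoc]
    refine hassoc.trans ?_
    by_cases hβγ : β = γ
    · subst hβγ
      have hmn : t m = t n := h.eq_of_eq (hy.symm.trans hz)
      rw [← hmn, h.left.mul hy.symm hy, h.mul_of_eq' hxy,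
        h.right.mul_eq_zero hxy hzw fun hm =>
          hne (Subtype.ext (Prod.ext rfl hm)), mul_zero, zero_mul]
    · rw [h.left.mul_eq_zero hy.symm hz hβγ, mul_zero, zero_mul, mul_zero, zero_mul]
  star := by
    rintro ⟨⟨α, l⟩, hx⟩ ⟨⟨β, m⟩, hy⟩ hxy
    simp only [tens, star_mul, h.left.star hx, h.left.star hy.symm, h.right.star hxy, mul_assoc]

lemma isMinimalMatrixUnits {C : NonUnitalStarSubalgebra ℂ A} (hg : IsMinimalMatrixUnits C σ g)
    (heC : ∀ {α β}, s α = s β → e α β ∈ C) :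
    IsMinimalMatrixUnits C (fun x : RefinedIndex s t => σ x.1.2)
      (fun x y => tens e g t x.1 y.1) where
  toIsMatrixUnits := h.isMatrixUnits
  mem {x y} hxy := mul_mem (mul_mem (heC x.2) (hg.mem hxy)) (heC y.2.symm)
  hasScalarEntries := by
    rintro c hc ⟨⟨α, l⟩, hx⟩ ⟨⟨β, m⟩, hy⟩ hxy
    obtain ⟨z, hz⟩ := hg.hasScalarEntries (e (t l) α * c * e β (t m))
      (mul_mem (mul_mem (heC hx.symm) hc) (heC hy)) l m hxy
    refine ⟨z, ?_⟩
    calc tens e g t (α, l) (α, l) * c * tens e g t (β, m) (β, m)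
        = e α (t l) * (g l l * (e (t l) α * c * e β (t m)) * g m m) * e (t m) β := by
          simp only [tens, mul_assoc]
      _ = z • tens e g t (α, l) (β, m) := by
          rw [hz, mul_smul_comm, smul_mul_assoc, tens]

end IsSubordinate

end TensorRefinement

section CompleteMatrixUnits

variable {D : Type u} [CStarAlgebra D] {C C' : NonUnitalStarSubalgebra ℂ D}

variable (C) in
/-- A full system of matrix units of the subalgebra `C`, whose unit is that of the ambient
algebra. -/
structure IsCompleteMatrixUnits {J T : Type*} [Fintype J] (s : J → T) (e : J → J → D) : Prop
    extends IsMinimalMatrixUnits C s e where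
  surjective : Function.Surjective s
  mul_mul_eq_zero : ∀ c ∈ C, ∀ {α β}, s α ≠ s β → e α α * c * e β β = 0
  sum_eq_one : ∑ α, e α α = 1

namespace IsCompleteMatrixUnits

variable {J T : Type*} [Fintype J] {s : J → T} {e : J → J → D}

lemma le_algebra (h : IsCompleteMatrixUnits C s e) : C ≤ h.algebra := by
  intro c hc
  have hsum : c = ∑ α, ∑ β, e α α * c * e β β := by
    simp only [← Finset.mul_sum, ← Finset.sum_mul, h.sum_eq_one, one_mul, mul_one]
  rw [hsum]
  refine sum_mem fun α _ => sum_mem fun β _ => ?_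
  by_cases hs : s α = s β
  · obtain ⟨z, hz⟩ := h.hasScalarEntries c hc α β hs
    exact hz ▸ SMulMemClass.smul_mem z (Submodule.subset_span ⟨⟨(α, β), hs⟩, rfl⟩)
  · exact (h.mul_mul_eq_zero c hc hs).symm ▸ zero_mem _

end IsCompleteMatrixUnits

lemma exists_isCompleteMatrixUnits (C : NonUnitalStarSubalgebra ℂ D) [FiniteDimensional ℂ C]
    (h1 : (1 : D) ∈ C) : ∃ (J T : Type u) (_ : Fintype J) (s : J → T) (e : J → J → D),
      IsCompleteMatrixUnits C s e := by
  obtain ⟨F, hF, horth, hsum⟩ := exists_finset_isMinimalProjection C h1 (.one D)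
  obtain ⟨T, s, e, hs, he, hdiag, hsep⟩ := exists_isMinimalMatrixUnits (C := C)
    (Subtype.val : F → D) (fun l => (hF l l.2).1)
    fun l l' hne => horth l.2 l'.2 (Subtype.coe_injective.ne hne)
  refine ⟨F, T, inferInstance, s, e, he, hs, fun c hc l l' hne => ?_, ?_⟩
  · rw [hdiag, hdiag, hsep c hc l l' hne]
  · simp only [hdiag, Finset.univ_eq_attach, Finset.sum_attach F fun l => l, hsum]

lemma IsSubordinate.isCompleteMatrixUnits {J T Λ S : Type*} [Fintype J] [Fintype Λ] [DecidableEq T]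
    {s : J → T} {e : J → J → D} {σ : Λ → S} {g : Λ → Λ → D} {t : Λ → J}
    (h : IsSubordinate s e σ g t) (heC : ∀ {α β}, s α = s β → e α β ∈ C) (hsum : ∑ α, e α α = 1)
    (hg : IsMinimalMatrixUnits C σ g) (hσ : Function.Surjective σ)
    (hsep : ∀ c ∈ C, ∀ {l l'}, σ l ≠ σ l' → g l l * c * g l' l' = 0) {r : T → J}
    (hr : ∀ i, s (r i) = i) (ht : ∀ l, t l = r (s (t l)))
    (hgsum : ∀ i, ∑ l with i = s (t l), g l l = e (r i) (r i)) :
    IsCompleteMatrixUnits C (fun x : RefinedIndex s t => σ x.1.2)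
      (fun x y => tens e g t x.1 y.1) where
  toIsMinimalMatrixUnits := h.isMinimalMatrixUnits hg heC
  surjective := hσ.forall.mpr fun l => ⟨⟨(t l, l), rfl⟩, rfl⟩
  mul_mul_eq_zero := by
    rintro c hc ⟨⟨α, l⟩, hx⟩ ⟨⟨β, m⟩, hy⟩ hne
    calc tens e g t (α, l) (α, l) * c * tens e g t (β, m) (β, m)
        = e α (t l) * (g l l * (e (t l) α * c * e β (t m)) * g m m) * e (t m) β := by
          simp only [tens, mul_assoc]
      _ = 0 := by
          rw [hsep _ (mul_mem (mul_mem (heC hx.symm) hc) (heC hy)) hne, mul_zero, zero_mul]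
  sum_eq_one := by
    let E : RefinedIndex s t ≃ Σ α, {l // s α = s (t l)} :=
      { toFun x := ⟨x.1.1, x.1.2, x.2⟩
        invFun y := ⟨(y.1, y.2.1), y.2.2⟩ }
    have hblock (α : J) : ∑ l : {l // s α = s (t l)}, tens e g t (α, l) (α, l) = e α α := by
      have hterm (l : {l // s α = s (t l)}) :
          tens e g t (α, l) (α, l) = e α (r (s α)) * g l l * e (r (s α)) α := by
        rw [tens, ht l, ← l.2]
      simp only [hterm, ← Finset.mul_sum, ← Finset.sum_mul]
      rw [← Finset.sum_subtype (Finset.univ.filter fun l => s α = s (t l)) (by simp)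
        fun l => g l l, hgsum, h.left.mul (hr _).symm rfl,
        h.left.mul (hr _).symm (hr _)]
    rw [← hsum, ← E.symm.sum_comp, Fintype.sum_sigma]
    exact Finset.sum_congr rfl fun α _ => hblock α

lemma IsCompleteMatrixUnits.exists_refinement {J T : Type u} [Fintype J] {s : J → T}
    {e : J → J → D} (he : IsCompleteMatrixUnits C s e) [FiniteDimensional ℂ C'] (hC : C ≤ C') :
    ∃ (Λ S : Type u) (_ : Fintype Λ) (t : Λ → J) (σ : Λ → S) (g : Λ → Λ → D),
      IsSubordinate s e σ g t ∧ IsCompleteMatrixUnits C' (fun x : RefinedIndex s t => σ x.1.2)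
        (fun x y => tens e g t x.1 y.1) := by
  classical
  have : Finite T := Finite.of_surjective s he.surjective
  have := Fintype.ofFinite T
  obtain ⟨r, hr⟩ : ∃ r : T → J, ∀ i, s (r i) = i := he.surjective.hasRightInverse
  choose F hF horth hsum using fun i =>
    exists_finset_isMinimalProjection C' (hC (he.mem rfl)) (he.isStarProjection (r i))
  let Λ := Σ i, F i
  have hdiag (l : Λ) : e (r l.1) (r l.1) * l.2 = l.2 := ((hF l.1 l.2 l.2.2).2).1
  have hdiag' (l : Λ) : (l.2 : D) * e (r l.1) (r l.1) = l.2 := ((hF l.1 l.2 l.2.2).2).2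
  obtain ⟨S, σ, g, hσ, hg, hgdiag, hsep⟩ := exists_isMinimalMatrixUnits (C := C')
    (fun l : Λ => (l.2 : D)) (fun l => (hF l.1 l.2 l.2.2).1) fun l l' hne => by
      obtain ⟨i, f⟩ := l
      obtain ⟨j, f'⟩ := l'
      by_cases hij : i = j
      · subst hij
        exact horth i f.2 f'.2 fun h => hne (congrArg (Sigma.mk i) (Subtype.ext h))
      · simp only
        rw [← hdiag' ⟨i, f⟩, ← hdiag ⟨j, f'⟩, mul_assoc, ← mul_assoc (e _ _),
          he.mul_eq_zero rfl rfl (fun h => hij (by rw [← hr i, h, hr])), zero_mul, mul_zero]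
  have hsub : IsSubordinate s e σ g fun l => r l.1 :=
    ⟨he.toIsMatrixUnits, hg.toIsMatrixUnits, fun l => by rw [hgdiag, hdiag],
      fun hl => congrArg r (by rwa [hr, hr] at hl)⟩
  refine ⟨Λ, S, inferInstance, _, σ, g, hsub, hsub.isCompleteMatrixUnits (fun hs => hC (he.mem hs))
    he.sum_eq_one hg hσ (fun c hc l l' hne => ?_) hr (fun l => ?_) fun i => ?_⟩
  · rw [hgdiag, hgdiag, hsep c hc l l' hne]
  · rw [hr]
  · simp only [hr, hgdiag, Finset.sum_filter]
    rw [Fintype.sum_sigma, Fintype.sum_eq_single i fun j hj => by simp [hj.symm]]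
    simp only [if_true, Finset.univ_eq_attach, Finset.sum_attach (F i) fun l => l, hsum]

end CompleteMatrixUnits

section Stages

variable {D : Type u} [CStarAlgebra D] {B : Type v} [NonUnitalCStarAlgebra B]
  {C : ℕ → NonUnitalStarSubalgebra ℂ B} {p : ℕ → B} {S S' : NonUnitalStarSubalgebra ℂ D}

variable (C p S) in
/-- A copy of the finite-dimensional algebra `S` inside one full matrix block `p m * C m * p m` of
the tower: complete matrix units `e` of `S`, with positions `J` in the blocks `T`, together with
minimal matrix units `E` of that block on the same index set. Unlike those of `e`, all the entries
of `E` are meaningful. -/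
structure Stage where
  J : Type u
  T : Type u
  [fintype : Fintype J]
  s : J → T
  e : J → J → D
  m : ℕ
  E : J → J → B
  complete : IsCompleteMatrixUnits S s e
  minimal : IsMinimalMatrixUnits (C m) (fun _ => ()) E
  mul_eq : ∀ α, E α α * p m = E α α

namespace Stage

attribute [instance] Stage.fintype

variable (X : Stage C p S)

lemma units : IsMatrixUnits X.s X.E :=
  X.minimal.toIsMatrixUnits.comp Function.injective_id fun _ => rfl

/-- The embedding of `S` into the tower that sends the matrix units of `S` to those of the tower. -/
noncomputable def embed : D →ₗ[ℂ] B := transfer X.s X.e X.E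

/-- The left inverse of `X.embed` that reads off matrix entries with respect to the units of the
tower. -/
noncomputable def retract : B →ₗ[ℂ] D := transfer X.s X.E X.e

lemma embed_unit {α β : X.J} (h : X.s α = X.s β) : X.embed (X.e α β) = X.E α β :=
  transfer_unit X.complete.toIsMatrixUnits h

lemma embed_mem (a : D) : X.embed a ∈ C X.m :=
  transfer_mem (fun _ _ _ => X.minimal.mem rfl) a

lemma norm_embed_le {a : D} (ha : a ∈ S) : ‖X.embed a‖ ≤ ‖a‖ :=
  norm_transfer_le X.complete.toIsMatrixUnits X.units (X.complete.hasScalarEntries a ha)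

lemma norm_retract_le {b : B} (hb : b ∈ C X.m) : ‖X.retract b‖ ≤ ‖b‖ :=
  norm_transfer_le X.units X.complete.toIsMatrixUnits
    fun α β _ => X.minimal.hasScalarEntries b hb α β rfl

lemma retract_embed {a : D} (ha : a ∈ S) : X.retract (X.embed a) = a :=
  transfer_transfer X.complete.toIsMatrixUnits X.units (X.complete.le_algebra ha)

lemma retract_unit_of_ne {α β : X.J} (h : X.s α ≠ X.s β) : X.retract (X.E α β) = 0 := by
  refine transfer_eq_zero fun {γ δ} hγδ => ?_
  by_cases hα : γ = α
  · have hβ : β ≠ δ := by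
      rintro rfl
      exact h (hα ▸ hγδ)
    rw [mul_assoc, X.minimal.mul_eq_zero rfl rfl hβ, mul_zero]
  · rw [X.minimal.mul_eq_zero rfl rfl hα, zero_mul]

lemma embed_star {a : D} (ha : a ∈ S) : X.embed (star a) = star (X.embed a) :=
  transfer_star X.complete.toIsMatrixUnits X.units (X.complete.le_algebra ha)

lemma embed_one : X.embed 1 = ∑ α, X.E α α := by
  simp only [← X.complete.sum_eq_one, map_sum, X.embed_unit rfl]

lemma isStarProjection_embed_one : IsStarProjection (X.embed 1) :=
  X.embed_one ▸ isStarProjection_sum _ (fun α _ => X.minimal.isStarProjection α)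
    fun _ _ _ _ hne => X.minimal.mul_eq_zero rfl rfl hne

lemma unit_mul_embed_one (α β : X.J) : X.E α β * X.embed 1 = X.E α β := by
  rw [X.embed_one, Finset.mul_sum, Finset.sum_eq_single_of_mem β (Finset.mem_univ β)
    fun γ _ hγ => X.minimal.mul_eq_zero rfl rfl hγ.symm, X.minimal.mul rfl rfl]

lemma embed_one_mul_unit (α β : X.J) : X.embed 1 * X.E α β = X.E α β := by
  simpa [X.minimal.star, X.isStarProjection_embed_one.isSelfAdjoint.star_eq] using
    congr(star $(X.unit_mul_embed_one β α))

-- By `hU` and `hV` both maps see only the entries `X.E α α * b * X.E β β`, which are scalar.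
lemma eq_on_of_eq_on_units {F : Type*} [AddCommGroup F] [Module ℂ F] {U V : B →ₗ[ℂ] F}
    (hU : ∀ b, U (X.embed 1 * b * X.embed 1) = U b) (hV : ∀ b, V (X.embed 1 * b * X.embed 1) = V b)
    (hUV : ∀ α β, U (X.E α β) = V (X.E α β)) {b : B} (hb : b ∈ C X.m) : U b = V b := by
  rw [← hU, ← hV, X.embed_one, Finset.sum_mul, Finset.sum_mul]
  simp only [Finset.mul_sum, map_sum]
  refine Finset.sum_congr rfl fun α _ => Finset.sum_congr rfl fun β _ => ?_
  obtain ⟨c, hc⟩ := X.minimal.hasScalarEntries b hb α β rfl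
  rw [hc, map_smul, map_smul, hUV]

end Stage

/-- `Y` is a later stage than `X`, at which a smaller part of the same copy of the algebra of `X` is
seen: multiplication by the unit `Y.embed 1` turns `X.embed` into `Y.embed`. -/
structure Stage.Refines (Y : Stage C p S') (X : Stage C p S) : Prop where
  lt : X.m < Y.m
  embed_mul : ∀ a ∈ S, X.embed a * Y.embed 1 = Y.embed a
  retract_eq : ∀ b ∈ C X.m, Y.retract b = X.retract b
  exists_expectation : ∃ R : D →ₗ[ℂ] D, (∀ a, R a ∈ S) ∧ (∀ a ∈ S', ‖R a‖ ≤ ‖a‖) ∧ ∀ a ∈ S, R a = a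

/-- Data refining the stage `X` to a stage for a larger algebra `S'`: matrix units `g` cutting those
of `S` down to complete matrix units of `S'`, and matrix units `G` on the same index set in the
tower. The unit `g l l` lives under position `t l` of `X`, the units `G l l` all under `α₀`. -/
structure Stage.Refinement (X : Stage C p S) (S' : NonUnitalStarSubalgebra ℂ D) where
  Λ : Type u
  T' : Type u
  [fintype : Fintype Λ]
  t : Λ → X.J
  σ : Λ → T'
  g : Λ → Λ → D
  subordinate : IsSubordinate X.s X.e σ g t
  complete : IsCompleteMatrixUnits S' (fun x : RefinedIndex X.s t => σ x.1.2)
    (fun x y => tens X.e g t x.1 y.1)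
  α₀ : X.J
  m : ℕ
  lt : X.m < m
  G : Λ → Λ → B
  towerMinimal : IsMinimalMatrixUnits (C m) (fun _ : X.J × Λ => ()) (tens X.E G fun _ => α₀)
  mul_eq : ∀ x, tens X.E G (fun _ => α₀) x x * p m = tens X.E G (fun _ => α₀) x x

namespace Stage.Refinement

attribute [instance] Stage.Refinement.fintype

variable {X : Stage C p S} (W : X.Refinement S')
include W

/-- The refined stage. -/
noncomputable def stage : Stage C p S' where
  J := RefinedIndex X.s W.t
  T := W.T'
  s x := W.σ x.1.2
  e x y := tens X.e W.g W.t x.1 y.1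
  m := W.m
  E x y := tens X.E W.G (fun _ => W.α₀) x.1 y.1
  complete := W.complete
  minimal := W.towerMinimal.comp Subtype.val_injective fun _ => rfl
  mul_eq x := W.mul_eq x.1

lemma stage_embed_mul_unit {α β : X.J} (h : X.s α = X.s β) (x : W.stage.J) :
    W.stage.embed (X.e α β * W.stage.e x x) = X.E α β * W.stage.E x x := by
  obtain ⟨⟨γ, l⟩, hx⟩ := x
  by_cases hβ : β = γ
  · subst hβ
    calc W.stage.embed (X.e α β * tens X.e W.g W.t (β, l) (β, l))
        = W.stage.embed (W.stage.e ⟨(α, l), h.trans hx⟩ ⟨(β, l), hx⟩) :=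
          congrArg _ (mul_tens W.subordinate.left h hx _)
      _ = tens X.E W.G (fun _ => W.α₀) (α, l) (β, l) := W.stage.embed_unit rfl
      _ = X.E α β * tens X.E W.G (fun _ => W.α₀) (β, l) (β, l) :=
          (mul_tens X.minimal.toIsMatrixUnits (x := (β, l)) rfl rfl _).symm
  · calc W.stage.embed (X.e α β * tens X.e W.g W.t (γ, l) (γ, l)) = 0 := by
          rw [mul_tens_of_ne W.subordinate.left h hx hβ, map_zero]
      _ = X.E α β * tens X.E W.G (fun _ => W.α₀) (γ, l) (γ, l) :=
          (mul_tens_of_ne X.minimal.toIsMatrixUnits rfl rfl hβ _).symm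

lemma embed_mul {a : D} (ha : a ∈ S) : X.embed a * W.stage.embed 1 = W.stage.embed a := by
  replace ha := X.complete.le_algebra ha
  induction ha using Submodule.span_induction with
  | mem x hx =>
    obtain ⟨l, rfl⟩ := hx
    calc X.embed (X.e l.1.1 l.1.2) * W.stage.embed 1
        = ∑ x, X.E l.1.1 l.1.2 * W.stage.E x x := by
          rw [X.embed_unit l.2, W.stage.embed_one, Finset.mul_sum]
      _ = ∑ x, W.stage.embed (X.e l.1.1 l.1.2 * W.stage.e x x) := by
          simp only [W.stage_embed_mul_unit l.2]
      _ = W.stage.embed (X.e l.1.1 l.1.2) := by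
          rw [← map_sum, ← Finset.mul_sum, W.stage.complete.sum_eq_one, mul_one]
  | zero => simp
  | add x y _ _ hx hy => rw [map_add, map_add, add_mul, hx, hy]
  | smul c x _ hx => rw [map_smul, map_smul, smul_mul_assoc, hx]

lemma stage_retract_unit_of_ne {α β : X.J} (h : X.s α ≠ X.s β) :
    W.stage.retract (X.E α β) = 0 := by
  refine transfer_eq_zero fun {x y} _ => ?_
  obtain ⟨⟨γ, l⟩, hx⟩ := x
  obtain ⟨⟨δ, m⟩, hy⟩ := y
  change tens X.E W.G (fun _ => W.α₀) (γ, l) (γ, l) * X.E α β *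
    tens X.E W.G (fun _ => W.α₀) (δ, m) (δ, m) = 0
  by_cases hβ : β = δ
  · subst hβ
    rw [mul_assoc, mul_tens X.minimal.toIsMatrixUnits (x := (β, m)) rfl rfl]
    refine W.towerMinimal.mul_eq_zero rfl rfl fun hlm => h ?_
    obtain ⟨rfl, rfl⟩ := Prod.mk.inj hlm
    exact hx.trans hy.symm
  · rw [mul_assoc, mul_tens_of_ne X.minimal.toIsMatrixUnits (x := (δ, m)) rfl rfl hβ, mul_zero]

lemma retract_eq (hS : S ≤ S') {b : B} (hb : b ∈ C X.m) : W.stage.retract b = X.retract b := by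
  refine X.eq_on_of_eq_on_units (fun b => ?_) (fun b => ?_) (fun α β => ?_) hb
  · refine (transfer_mul_right (fun x => ?_) _).trans (transfer_mul_left (fun x => ?_) b) <;>
      simp only [stage, tens, mul_assoc, X.unit_mul_embed_one]
    simp only [← mul_assoc, X.embed_one_mul_unit]
  · exact (transfer_mul_right (fun α => X.embed_one_mul_unit α α) _).trans
      (transfer_mul_left (fun α => X.unit_mul_embed_one α α) b)
  · by_cases h : X.s α = X.s β
    · have he : X.e α β ∈ S := X.complete.mem h
      calc W.stage.retract (X.E α β) = W.stage.retract (X.embed (X.e α β) * W.stage.embed 1) := by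
            rw [X.embed_unit h]
            exact (transfer_mul_right (fun x => W.stage.embed_one_mul_unit x x) _).symm
        _ = X.e α β := by rw [W.embed_mul he, W.stage.retract_embed (hS he)]
        _ = X.retract (X.E α β) := (transfer_unit X.units h).symm
    · rw [W.stage_retract_unit_of_ne h, X.retract_unit_of_ne h]

lemma exists_block_eq (i : X.T) : ∃ l, X.s (W.t l) = i := by
  obtain ⟨α, rfl⟩ := X.complete.surjective i
  by_contra! hne
  refine X.complete.ne_zero α ?_
  rw [← mul_one (X.e α α), ← W.complete.sum_eq_one, Finset.mul_sum]
  refine Finset.sum_eq_zero fun x _ => mul_tens_of_ne W.subordinate.left rfl x.2 ?_ _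
  exact fun h => hne x.1.2 (h ▸ x.2.symm)

-- Compress by one refining unit under each block of `S`; the compressed units span a copy of `S`.
lemma exists_expectation : ∃ R : D →ₗ[ℂ] D,
    (∀ a, R a ∈ S) ∧ (∀ a ∈ S', ‖R a‖ ≤ ‖a‖) ∧ ∀ a ∈ S, R a = a := by
  choose l hl using W.exists_block_eq
  let f (α : X.J) : RefinedIndex X.s W.t := ⟨(α, l (X.s α)), (hl _).symm⟩
  have hf : Function.Injective f := fun α β h => congrArg (fun x => x.1.1) h
  have hunits : IsMinimalMatrixUnits S' X.s fun α β => tens X.e W.g W.t (f α).1 (f β).1 :=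
    W.complete.comp hf fun h => by simp only [f, h]
  refine ⟨transfer X.s (fun α β => tens X.e W.g W.t (f α).1 (f β).1) X.e,
    transfer_mem (fun _ _ h => X.complete.mem h), fun a ha => norm_transfer_le
      hunits.toIsMatrixUnits X.complete.toIsMatrixUnits (hunits.hasScalarEntries a ha),
    fun a ha => ?_⟩
  replace ha := X.complete.le_algebra ha
  induction ha using Submodule.span_induction with
  | mem x hx =>
    obtain ⟨⟨⟨α, β⟩, hq⟩, rfl⟩ := hx
    have hq : X.s α = X.s β := hq
    refine transfer_eq hunits.toIsMatrixUnits hq ?_ fun {γ δ} hγδ hne => ?_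
    · rw [mul_assoc, mul_tens W.subordinate.left hq (f β).2]
      simpa only [f, hq] using hunits.mul rfl hq
    · rw [mul_assoc]
      by_cases hδ : β = δ
      · subst hδ
        rw [mul_tens W.subordinate.left hq (f β).2]
        simpa only [f, hq] using hunits.mul_eq_zero rfl hq (hne.resolve_right (· rfl))
      · rw [mul_tens_of_ne W.subordinate.left hq (f δ).2 hδ, mul_zero]
  | zero => simp
  | add x y _ _ hx hy => rw [map_add, hx, hy]
  | smul c x _ hx => rw [map_smul, hx]

lemma refines (hS : S ≤ S') : W.stage.Refines X where
  lt := W.lt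
  embed_mul _ := W.embed_mul
  retract_eq _ := W.retract_eq hS
  exists_expectation := W.exists_expectation

end Stage.Refinement

namespace FermionTower

variable (h : FermionTower C p)
include h

lemma nonempty_refinement [Nontrivial D] (X : Stage C p S) [FiniteDimensional ℂ S'] (hS : S ≤ S') :
    Nonempty (X.Refinement S') := by
  obtain ⟨Λ, T', _, t, σ, g, hsub, hcomplete⟩ := X.complete.exists_refinement hS
  obtain ⟨α₀⟩ : Nonempty X.J := by
    by_contra! hempty
    exact one_ne_zero (α := D) (by rw [← X.complete.sum_eq_one, Finset.univ_eq_empty,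
      Finset.sum_empty])
  obtain ⟨m, G, hm, hG, hGm⟩ :=
    h.exists_isMinimalMatrixUnits (X.minimal.isMinimalProjection α₀) (X.mul_eq α₀) Λ
  have hE (α β : X.J) : X.E α β ∈ C m := h.isAFPresentation.1 hm.le (X.minimal.mem rfl)
  have hsub' : IsSubordinate (fun _ => ()) X.E (fun _ => ()) G (fun _ => α₀) :=
    ⟨X.minimal.toIsMatrixUnits, hG.toIsMatrixUnits, fun l => (hGm l).2, fun _ => rfl⟩
  have hmin : IsMinimalMatrixUnits (C m) (fun _ : X.J × Λ => ()) (tens X.E G fun _ => α₀) :=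
    (hsub'.isMinimalMatrixUnits hG fun _ => hE _ _).comp (f := fun x => ⟨x, rfl⟩)
      (fun x y hxy => congrArg Subtype.val hxy) fun _ => rfl
  refine ⟨⟨Λ, T', t, σ, g, hsub, hcomplete, α₀, m, hm, G, hmin, fun x => ?_⟩⟩
  have hcentral := (h.isMinimalCentralProjection m).central
  rw [tens, mul_assoc, ← hcentral _ (hE _ _), ← mul_assoc, mul_assoc (X.E _ _), (hGm _).1]

lemma nonempty_stage [FiniteDimensional ℂ S] (hS : 1 ∈ S) : Nonempty (Stage C p S) := by
  obtain ⟨J, T, _, s, e, he⟩ := exists_isCompleteMatrixUnits S hS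
  have := h.isAFPresentation.2.1 0
  have hp := h.isMinimalCentralProjection 0
  obtain ⟨f, hf, hfmin⟩ := exists_isMinimalProjection (C 0) hp.mem hp.isStarProjection hp.ne_zero
  obtain ⟨m, E, -, hE, hEm⟩ := h.exists_isMinimalMatrixUnits hfmin hf.2 J
  exact ⟨⟨J, T, s, e, m, E, he, hE, fun α => (hEm α).1⟩⟩

lemma exists_stages [Nontrivial D] {S : ℕ → NonUnitalStarSubalgebra ℂ D}
    (hS : IsAFPresentation D S) (h1 : 1 ∈ S 0) :
    ∃ X : ∀ k, Stage C p (S k), ∀ k, (X (k + 1)).Refines (X k) := by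
  have := hS.2.1
  let W (k : ℕ) (X : Stage C p (S k)) : X.Refinement (S (k + 1)) :=
    (h.nonempty_refinement X (hS.1 k.le_succ)).some
  exact ⟨fun k => Nat.rec (h.nonempty_stage h1).some (fun k X => (W k X).stage) k,
    fun k => (W k _).refines (hS.1 k.le_succ)⟩

end FermionTower

end Stages

section Limit

lemma exists_continuousLinearMap_extension {𝕜 E F : Type*} [NontriviallyNormedField 𝕜]
    [NormedAddCommGroup E] [NormedSpace 𝕜 E] [NormedAddCommGroup F] [NormedSpace 𝕜 F]
    [CompleteSpace F] {U : ℕ → Submodule 𝕜 E} (hU : Monotone U)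
    (hdense : Dense (⋃ k, (U k : Set E))) {f : ℕ → E →ₗ[𝕜] F}
    (hf : ∀ k, ∀ a ∈ U k, f (k + 1) a = f k a) (hnorm : ∀ k, ∀ a ∈ U k, ‖f k a‖ ≤ ‖a‖) :
    ∃ G : E →L[𝕜] F, ∀ k, ∀ a ∈ U k, G a = f k a := by
  let φ (k : ℕ) : E →ₗ.[𝕜] F := ⟨U k, (f k).domRestrict (U k)⟩
  have hφ : Monotone φ := monotone_nat_of_le_succ fun k =>
    ⟨hU k.le_succ, fun x y hxy => (hf k x x.2).symm.trans (congrArg (f (k + 1)) hxy)⟩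
  have hdir : DirectedOn (· ≤ ·) (Set.range φ) := hφ.directed_le.directedOn_range
  let g := LinearPMap.sSup (Set.range φ) hdir
  have hmem {k : ℕ} {a : E} (ha : a ∈ U k) : a ∈ g.domain :=
    (LinearPMap.le_sSup hdir (Set.mem_range_self k)).1 ha
  have hg {k : ℕ} {a : E} (ha : a ∈ U k) : g ⟨a, hmem ha⟩ = f k a :=
    LinearPMap.sSup_apply hdir (Set.mem_range_self k) ⟨a, ha⟩
  have hbound (x : g.domain) : ‖g x‖ ≤ 1 * ‖x‖ := by
    obtain ⟨a, ha⟩ := x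
    obtain ⟨_, ⟨k, rfl⟩, hk⟩ :=
      (LinearPMap.mem_domain_sSup_iff (Set.range_nonempty φ) hdir).mp ha
    rw [hg hk, one_mul]
    exact hnorm k a hk
  have hrange : DenseRange g.domain.subtypeL := hdense.mono <|
    Set.iUnion_subset fun k a ha => ⟨⟨a, hmem ha⟩, rfl⟩
  refine ⟨(g.toFun.mkContinuous 1 hbound).extend g.domain.subtypeL, fun k a ha => ?_⟩
  exact (ContinuousLinearMap.extend_eq _ hrange (isUniformInducing_val _) ⟨a, hmem ha⟩).trans
    (hg ha)

variable {D : Type u} [CStarAlgebra D] {B : Type v} [NonUnitalCStarAlgebra B]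
  {C : ℕ → NonUnitalStarSubalgebra ℂ B} {p : ℕ → B} {S S' : NonUnitalStarSubalgebra ℂ D}

/-- `i` is a contractive right inverse of `X.retract` on `S` whose compression to the unit of
the stage is `X.embed`. The embeddings of successive stages do not extend one another, but sections
can be chosen so that they do. -/
structure Stage.IsSection (X : Stage C p S) (i : D →ₗ[ℂ] B) : Prop where
  mem : ∀ a ∈ S, i a ∈ C X.m
  unit_mul : ∀ a ∈ S, X.embed 1 * i a = X.embed a
  mul_unit : ∀ a ∈ S, i a * X.embed 1 = X.embed a
  norm_le : ∀ a ∈ S, ‖i a‖ ≤ ‖a‖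
  retract_eq : ∀ a ∈ S, X.retract (i a) = a

namespace Stage

lemma embed_one_mul (X : Stage C p S) (a : D) : X.embed 1 * X.embed a = X.embed a := by
  change X.embed 1 * transfer X.s X.e X.E a = transfer X.s X.e X.E a
  simp only [transfer_apply, Finset.mul_sum, mul_smul_comm, X.embed_one_mul_unit]

lemma embed_mul_one (X : Stage C p S) (a : D) : X.embed a * X.embed 1 = X.embed a := by
  change transfer X.s X.e X.E a * X.embed 1 = transfer X.s X.e X.E a
  simp only [transfer_apply, Finset.sum_mul, smul_mul_assoc, X.unit_mul_embed_one]

lemma isSection_embed (X : Stage C p S) : X.IsSection X.embed where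
  mem a _ := X.embed_mem a
  unit_mul a _ := X.embed_one_mul a
  mul_unit a _ := X.embed_mul_one a
  norm_le _ := X.norm_embed_le
  retract_eq _ := X.retract_embed

namespace IsSection

variable {Y : Stage C p S'} {X : Stage C p S} {i : D →ₗ[ℂ] B} (hi : X.IsSection i)
  (h : Y.Refines X) (h1 : 1 ∈ S)
include hi h h1

lemma mul_embed_one {a : D} (ha : a ∈ S) : i a * Y.embed 1 = Y.embed a := by
  calc i a * Y.embed 1 = i a * (X.embed 1 * Y.embed 1) := by rw [h.embed_mul 1 h1]
    _ = Y.embed a := by rw [← mul_assoc, hi.mul_unit a ha, h.embed_mul a ha]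

lemma embed_one_mul (hS : S ≤ S') {a : D} (ha : a ∈ S) : Y.embed 1 * i a = Y.embed a := by
  have hstar {b : D} (hb : b ∈ S) : Y.embed 1 * X.embed b = Y.embed b := by
    simpa [X.embed_star hb, Y.embed_star (hS hb),
      Y.isStarProjection_embed_one.isSelfAdjoint.star_eq] using
      congr(star $(h.embed_mul (star b) (star_mem hb)))
  calc Y.embed 1 * i a = Y.embed 1 * X.embed 1 * i a := by rw [hstar h1]
    _ = Y.embed a := by rw [mul_assoc, hi.unit_mul a ha, hstar ha]

-- The two summands live under complementary projections.
lemma norm_sub_add_le (hS : S ≤ S') {a b : D} (hb : b ∈ S) (ha : a ∈ S') :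
    ‖i b - Y.embed b + Y.embed a‖ ≤ max ‖b‖ ‖a‖ := by
  have hleft : Y.embed 1 * (i b - Y.embed b) = 0 := by
    rw [mul_sub, hi.embed_one_mul h h1 hS hb, Y.embed_one_mul, sub_self]
  have hright : (i b - Y.embed b) * Y.embed 1 = 0 := by
    rw [sub_mul, hi.mul_embed_one h h1 hb, Y.embed_mul_one, sub_self]
  have hnorm {c : D} (hc : c ∈ S') : ‖i b - Y.embed b + Y.embed c‖ =
      max ‖i b - Y.embed b‖ ‖Y.embed c‖ := by
    refine norm_add_eq_max_of_orthogonal ?_ ?_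
    · have hstar : star (i b - Y.embed b) * Y.embed 1 = 0 := by
        simpa [Y.isStarProjection_embed_one.isSelfAdjoint.star_eq] using congr(star $hleft)
      rw [← Y.embed_one_mul c, ← mul_assoc, hstar, zero_mul]
    · rw [← Y.embed_star hc, ← Y.embed_one_mul (star c), ← mul_assoc, hright, zero_mul]
  have hdiff : ‖i b - Y.embed b‖ ≤ ‖b‖ := by
    calc ‖i b - Y.embed b‖ ≤ ‖i b - Y.embed b + Y.embed b‖ :=
          (hnorm (hS hb)).symm ▸ le_max_left _ _
      _ ≤ ‖b‖ := by simpa using hi.norm_le b hb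
  rw [hnorm ha]
  exact max_le_max hdiff (Y.norm_embed_le ha)

lemma exists_extension (hC : Monotone C) (hS : S ≤ S') :
    ∃ i', Y.IsSection i' ∧ ∀ a ∈ S, i' a = i a := by
  obtain ⟨R, hRmem, hRnorm, hRid⟩ := h.exists_expectation
  let i' : D →ₗ[ℂ] B := (i - Y.embed) ∘ₗ R + Y.embed
  have hi' (a : D) : i' a = i (R a) - Y.embed (R a) + Y.embed a := rfl
  have hmem (a : D) : i (R a) ∈ C Y.m := hC h.lt.le (hi.mem _ (hRmem a))
  refine ⟨i', ⟨fun a _ => ?_, fun a _ => ?_, fun a _ => ?_, fun a ha => ?_, fun a ha => ?_⟩,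
    fun a ha => ?_⟩
  · exact add_mem (sub_mem (hmem a) (Y.embed_mem _)) (Y.embed_mem a)
  · rw [hi', mul_add, mul_sub, hi.embed_one_mul h h1 hS (hRmem a), Y.embed_one_mul,
      Y.embed_one_mul, sub_self, zero_add]
  · rw [hi', add_mul, sub_mul, hi.mul_embed_one h h1 (hRmem a), Y.embed_mul_one,
      Y.embed_mul_one, sub_self, zero_add]
  · rw [hi']
    exact (hi.norm_sub_add_le h h1 hS (hRmem a) ha).trans (max_le (hRnorm a ha) le_rfl)
  · rw [hi', map_add, map_sub, h.retract_eq _ (hi.mem _ (hRmem a)), hi.retract_eq _ (hRmem a),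
      Y.retract_embed (hS (hRmem a)), sub_self, zero_add, Y.retract_embed ha]
  · rw [hi', hRid a ha, sub_add_cancel]

end IsSection

end Stage

lemma exists_sections {S : ℕ → NonUnitalStarSubalgebra ℂ D} (hS : Monotone S) (h1 : 1 ∈ S 0)
    (hC : Monotone C) {X : ∀ k, Stage C p (S k)} (hX : ∀ k, (X (k + 1)).Refines (X k)) :
    ∃ i : ℕ → D →ₗ[ℂ] B, (∀ k, (X k).IsSection (i k)) ∧
      ∀ k, ∀ a ∈ S k, i (k + 1) a = i k a := by
  choose next hnext hextends using fun (k : ℕ) (i : {i // (X k).IsSection i}) =>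
    i.2.exists_extension (hX k) (hS k.zero_le h1) hC (hS k.le_succ)
  let i (k : ℕ) : {i // (X k).IsSection i} :=
    Nat.rec ⟨_, (X 0).isSection_embed⟩ (fun k i => ⟨next k i, hnext k i⟩) k
  exact ⟨fun k => (i k).1, fun k => (i k).2, fun k => hextends k (i k)⟩

variable (h : FermionTower C p)
include h

lemma FermionTower.exists_leftInverse_of_unital [Nontrivial D]
    {S : ℕ → NonUnitalStarSubalgebra ℂ D} (hS : IsAFPresentation D S) (h1 : 1 ∈ S 0) :
    ∃ (i : D →L[ℂ] B) (r : B →L[ℂ] D), Function.LeftInverse r i := by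
  obtain ⟨X, hX⟩ := h.exists_stages hS h1
  obtain ⟨ι, hι, hιs⟩ := exists_sections hS.1 h1 h.isAFPresentation.1 hX
  obtain ⟨i, hi⟩ := exists_continuousLinearMap_extension (U := fun k => (S k).toSubmodule)
    hS.1 hS.2.2 hιs fun k => (hι k).norm_le
  have hm : StrictMono fun k => (X k).m := strictMono_nat_of_lt_succ fun k => (hX k).lt
  have hC := isAFPresentation_comp h.isAFPresentation hm
  obtain ⟨r, hr⟩ := exists_continuousLinearMap_extension
    (U := fun k => (C (X k).m).toSubmodule) (f := fun k => (X k).retract)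
    hC.1 hC.2.2 (fun k => (hX k).retract_eq) fun k b => (X k).norm_retract_le
  refine ⟨i, r, fun a => ?_⟩
  refine congrFun (Continuous.ext_on hS.2.2 (r.continuous.comp i.continuous) continuous_id ?_) a
  rintro a ha
  obtain ⟨k, hk⟩ := Set.mem_iUnion.mp ha
  calc r (i a) = (X k).retract (ι k a) := by rw [hi k a hk, hr k _ ((hι k).mem a hk)]
    _ = a := (hι k).retract_eq a hk

end Limit

section Unitization

variable {Z : Type*} [NonUnitalCStarAlgebra Z]

/-- The elements of the unitization of `Z` whose component in `Z` lies in `S`; this is the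
unitization of `S`. -/
def unitizationSubalgebra (S : NonUnitalStarSubalgebra ℂ Z) :
    NonUnitalStarSubalgebra ℂ (Unitization ℂ Z) where
  carrier := {x | x.snd ∈ S}
  add_mem' hx hy := add_mem (S := NonUnitalStarSubalgebra ℂ Z) hx hy
  zero_mem' := zero_mem S
  smul_mem' c _ hx := SMulMemClass.smul_mem (S := NonUnitalStarSubalgebra ℂ Z) c hx
  mul_mem' hx hy := add_mem (S := NonUnitalStarSubalgebra ℂ Z) (add_mem
    (SMulMemClass.smul_mem _ hy) (SMulMemClass.smul_mem _ hx)) (mul_mem hx hy)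
  star_mem' hx := star_mem (S := NonUnitalStarSubalgebra ℂ Z) hx

lemma mem_unitizationSubalgebra {S : NonUnitalStarSubalgebra ℂ Z} {x : Unitization ℂ Z} :
    x ∈ unitizationSubalgebra S ↔ x.snd ∈ S := Iff.rfl

instance finiteDimensional_unitizationSubalgebra (S : NonUnitalStarSubalgebra ℂ Z)
    [FiniteDimensional ℂ S] : FiniteDimensional ℂ (unitizationSubalgebra S) := by
  let L : unitizationSubalgebra S →ₗ[ℂ] ℂ × S :=
    { toFun x := (x.1.fst, ⟨x.1.snd, x.2⟩)
      map_add' _ _ := rfl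
      map_smul' _ _ := rfl }
  refine .of_injective L fun x y hxy => Subtype.ext (Unitization.ext ?_ ?_)
  · exact congrArg (fun q => q.1) hxy
  · exact congrArg (fun q => (q.2 : Z)) hxy

lemma isAFPresentation_unitizationSubalgebra {S : ℕ → NonUnitalStarSubalgebra ℂ Z}
    (hS : IsAFPresentation Z S) :
    IsAFPresentation (Unitization ℂ Z) fun k => unitizationSubalgebra (S k) := by
  have := hS.2.1
  refine ⟨fun k l hkl x hx => hS.1 hkl hx, fun k => inferInstance, fun x => ?_⟩
  rw [← Unitization.inl_fst_add_inr_snd_eq x]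
  refine map_mem_closure (f := fun z : Z => Unitization.inl x.fst + (z : Unitization ℂ Z))
    (continuous_const.add Unitization.continuous_inr) (hS.2.2 x.snd) fun z hz => ?_
  obtain ⟨k, hk⟩ := Set.mem_iUnion.mp hz
  refine Set.mem_iUnion.mpr ⟨k, mem_unitizationSubalgebra.mpr ?_⟩
  simpa using hk

end Unitization

section NullSequences

open Topology ZeroAtInfty

section Shift

variable {E : Type*} [NormedAddCommGroup E]

lemma tendsto_nat_zeroAtInfty (f : C₀(ℕ, E)) : Filter.Tendsto f Filter.atTop (𝓝 0) := by
  simpa only [cocompact_eq_atTop] using zero_at_infty f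

/-- The element of `C₀(ℕ, E)` given by a null sequence in `E`. -/
def ofNullSequence (f : ℕ → E) (hf : Filter.Tendsto f Filter.atTop (𝓝 0)) : C₀(ℕ, E) where
  toFun := f
  zero_at_infty' := by rwa [cocompact_eq_atTop]

lemma norm_apply_le (f : C₀(ℕ, E)) (n : ℕ) : ‖f n‖ ≤ ‖f‖ :=
  f.toBCF.norm_coe_le_norm n

lemma norm_le_of_forall_norm_apply_le (f : C₀(ℕ, E)) {r : ℝ} (hr : 0 ≤ r)
    (h : ∀ n, ‖f n‖ ≤ r) : ‖f‖ ≤ r :=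
  (f.toBCF.norm_le hr).mpr h

/-- The null sequence `f 1, f 2, …`. -/
def nullSequenceTail (f : C₀(ℕ, E)) : C₀(ℕ, E) :=
  ofNullSequence (fun n => f (n + 1))
    ((tendsto_nat_zeroAtInfty f).comp (Filter.tendsto_add_atTop_nat 1))

/-- Splitting off the first term of a null sequence. -/
def nullSequenceConsEquiv (𝕜 E : Type*) [NormedField 𝕜] [NormedAddCommGroup E] [NormedSpace 𝕜 E] :
    C₀(ℕ, E) ≃ₗᵢ[𝕜] E × C₀(ℕ, E) where
  toFun f := (f 0, nullSequenceTail f)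
  map_add' _ _ := rfl
  map_smul' _ _ := rfl
  invFun q := ofNullSequence (fun n => Nat.casesOn n q.1 q.2)
    ((Filter.tendsto_add_atTop_iff_nat 1).mp (tendsto_nat_zeroAtInfty q.2))
  left_inv f := by
    ext n
    cases n <;> rfl
  right_inv q := rfl
  norm_map' f := by
    refine le_antisymm (max_le (norm_apply_le f 0) ?_) ?_
    · exact norm_le_of_forall_norm_apply_le _ (norm_nonneg f) fun n => norm_apply_le f (n + 1)
    · refine norm_le_of_forall_norm_apply_le f (norm_nonneg _) fun n => ?_
      cases n with
      | zero => exact le_max_left _ _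
      | succ n => exact (norm_apply_le (nullSequenceTail f) n).trans (le_max_right _ _)

end Shift

variable {A : Type*} [NonUnitalCStarAlgebra A]

/-- The sequences in `S` vanishing from index `k` on. -/
def sequenceSubalgebra (S : NonUnitalStarSubalgebra ℂ A) (k : ℕ) :
    NonUnitalStarSubalgebra ℂ C₀(ℕ, A) where
  carrier := {f | (∀ i, f i ∈ S) ∧ ∀ i, k ≤ i → f i = 0}
  add_mem' hf hg := ⟨fun i => add_mem (hf.1 i) (hg.1 i), fun i hi => by simp [hf.2 i hi, hg.2 i hi]⟩
  zero_mem' := ⟨fun _ => zero_mem S, fun _ _ => rfl⟩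
  smul_mem' c _ hf := ⟨fun i => SMulMemClass.smul_mem c (hf.1 i), fun i hi => by simp [hf.2 i hi]⟩
  mul_mem' hf hg := ⟨fun i => mul_mem (hf.1 i) (hg.1 i), fun i hi => by simp [hf.2 i hi]⟩
  star_mem' hf := ⟨fun i => star_mem (hf.1 i), fun i hi => by simp [hf.2 i hi]⟩

instance finiteDimensional_sequenceSubalgebra (S : NonUnitalStarSubalgebra ℂ A)
    [FiniteDimensional ℂ S] (k : ℕ) : FiniteDimensional ℂ (sequenceSubalgebra S k) := by
  let L : sequenceSubalgebra S k →ₗ[ℂ] Fin k → S :=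
    { toFun f i := ⟨f.1 i, f.2.1 i⟩
      map_add' _ _ := rfl
      map_smul' _ _ := rfl }
  refine .of_injective L fun f g hfg => Subtype.ext (ZeroAtInftyContinuousMap.ext fun i => ?_)
  rcases lt_or_ge i k with hi | hi
  · exact congrArg (fun q => (q ⟨i, hi⟩ : A)) hfg
  · rw [f.2.2 i hi, g.2.2 i hi]

lemma exists_mem_sequenceSubalgebra {S : ℕ → NonUnitalStarSubalgebra ℂ A} (hS : Monotone S)
    {a : ℕ → A} (ha : ∀ i, a i ∈ ⋃ k, (S k : Set A)) (N : ℕ) :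
    ∃ k, ∃ g ∈ sequenceSubalgebra (S k) k, (∀ i < N, g i = a i) ∧ ∀ i, N ≤ i → g i = 0 := by
  choose k hk using fun i => Set.mem_iUnion.mp (ha i)
  let g : C₀(ℕ, A) := ofNullSequence (fun i => if i < N then a i else 0)
    (tendsto_const_nhds.congr'
      ((Filter.eventually_ge_atTop N).mono fun i hi => (if_neg hi.not_gt).symm))
  have hg : ∀ i < N, g i = a i := fun i hi => if_pos hi
  have hg' : ∀ i, N ≤ i → g i = 0 := fun i hi => if_neg hi.not_gt
  refine ⟨max N ((Finset.range N).sup k), g, ⟨fun i => ?_, fun i hi => ?_⟩, hg, hg'⟩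
  · rcases lt_or_ge i N with hi | hi
    · have hki : k i ≤ (Finset.range N).sup k := Finset.le_sup (Finset.mem_range.mpr hi)
      rw [hg i hi]
      exact hS (le_max_of_le_right hki) (hk i)
    · rw [hg' i hi]
      exact zero_mem _
  · exact hg' i ((le_max_left _ _).trans hi)

lemma isAFPresentation_sequenceSubalgebra {S : ℕ → NonUnitalStarSubalgebra ℂ A}
    (hS : IsAFPresentation A S) :
    IsAFPresentation C₀(ℕ, A) fun k => sequenceSubalgebra (S k) k := by
  have := hS.2.1
  refine ⟨fun k l hkl f hf => ⟨fun i => hS.1 hkl (hf.1 i), fun i hi => hf.2 i (hkl.trans hi)⟩,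
    fun k => inferInstance, fun f => Metric.mem_closure_iff.mpr fun ε hε => ?_⟩
  obtain ⟨N, hN⟩ := Metric.tendsto_atTop.mp (tendsto_nat_zeroAtInfty f) (ε / 2) (half_pos hε)
  choose a ha hfa using fun i => Metric.mem_closure_iff.mp (hS.2.2 (f i)) (ε / 2) (half_pos hε)
  obtain ⟨k, g, hg, hlt, hge⟩ := exists_mem_sequenceSubalgebra hS.1 ha N
  refine ⟨g, Set.mem_iUnion.mpr ⟨k, hg⟩, lt_of_le_of_lt ?_ (half_lt_self hε)⟩
  rw [dist_eq_norm]
  refine norm_le_of_forall_norm_apply_le _ (half_pos hε).le fun i => ?_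
  rw [ZeroAtInftyContinuousMap.sub_apply, ← dist_eq_norm]
  rcases lt_or_ge i N with hi | hi
  · exact hlt i hi ▸ (hfa i).le
  · exact hge i hi ▸ (hN i hi).le

end NullSequences

section Decomposition

-- `B ≃ Z × K ≃ (A × Z) × K ≃ A × (Z × K) ≃ A × B`, where `K` is the kernel of `r`.
lemma nonempty_continuousLinearEquiv_prod_of_leftInverse {𝕜 A B Z : Type*}
    [NontriviallyNormedField 𝕜]
    [NormedAddCommGroup Z] [NormedSpace 𝕜 Z] [NormedAddCommGroup A] [NormedSpace 𝕜 A]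
    [NormedAddCommGroup B] [NormedSpace 𝕜 B] (f : Z ≃L[𝕜] A × Z) {i : Z →L[𝕜] B} {r : B →L[𝕜] Z}
    (h : Function.LeftInverse r i) : Nonempty (B ≃L[𝕜] A × B) := by
  let e := ContinuousLinearEquiv.equivOfRightInverse r i h
  exact ⟨((e.trans (f.prodCongr (.refl 𝕜 _))).trans (.prodAssoc 𝕜 _ _ _)).trans
    ((ContinuousLinearEquiv.refl 𝕜 A).prodCongr e.symm)⟩

variable {B : Type*} [NonUnitalCStarAlgebra B] {C : ℕ → NonUnitalStarSubalgebra ℂ B} {p : ℕ → B}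

lemma FermionTower.exists_leftInverse (h : FermionTower C p) {Z : Type*} [NonUnitalCStarAlgebra Z]
    {S : ℕ → NonUnitalStarSubalgebra ℂ Z} (hS : IsAFPresentation Z S) :
    ∃ (i : Z →L[ℂ] B) (r : B →L[ℂ] Z), Function.LeftInverse r i := by
  obtain ⟨i, r, hri⟩ := h.exists_leftInverse_of_unital (isAFPresentation_unitizationSubalgebra hS)
    (zero_mem (S 0))
  let inr : Z →L[ℂ] Unitization ℂ Z := ⟨Unitization.inrHom ℂ ℂ Z, Unitization.continuous_inr⟩
  let snd : Unitization ℂ Z →L[ℂ] Z := ⟨Unitization.sndHom ℂ ℂ Z, Unitization.continuous_snd⟩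
  exact ⟨i ∘L inr, snd ∘L r, fun z => congrArg snd (hri (inr z))⟩

lemma FermionTower.nonempty_continuousLinearEquiv_prod (h : FermionTower C p) {A : Type*}
    [NonUnitalCStarAlgebra A] {S : ℕ → NonUnitalStarSubalgebra ℂ A} (hS : IsAFPresentation A S) :
    Nonempty (B ≃L[ℂ] A × B) := by
  obtain ⟨i, r, hri⟩ := h.exists_leftInverse (isAFPresentation_sequenceSubalgebra hS)
  exact nonempty_continuousLinearEquiv_prod_of_leftInverse
    (nullSequenceConsEquiv ℂ A).toContinuousLinearEquiv hri

end Decomposition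

end FermionAF

theorem fermion_presentations_linearly_homeomorphic
    (A B : Type*) [NonUnitalCStarAlgebra A] [NonUnitalCStarAlgebra B]
    (hA : ∃ SA : ℕ → NonUnitalStarSubalgebra ℂ A,
      IsAFPresentation A SA ∧ HasFermionProperty A SA)
    (hB : ∃ SB : ℕ → NonUnitalStarSubalgebra ℂ B,
      IsAFPresentation B SB ∧ HasFermionProperty B SB) :
    Nonempty (A ≃L[ℂ] B) := by
  obtain ⟨SA, hSA, hFA⟩ := hA
  obtain ⟨SB, hSB, hFB⟩ := hB
  obtain ⟨_, _, hA⟩ := FermionAF.exists_fermionTower hSA hFA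
  obtain ⟨_, _, hB⟩ := FermionAF.exists_fermionTower hSB hFB
  obtain ⟨f⟩ : Nonempty (B ≃L[ℂ] A × B) := hB.nonempty_continuousLinearEquiv_prod hSA
  obtain ⟨g⟩ : Nonempty (A ≃L[ℂ] B × A) := hA.nonempty_continuousLinearEquiv_prod hSB
  exact ⟨(g.trans (ContinuousLinearEquiv.prodComm ℂ B A)).trans f.symm⟩
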